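/- arXiv:0909.0692 — 2 statements merged into one kernel-verified Lean document; each statement's English description precedes it below -/
import Mathlib

section
/- (Möbius-invariant Trudinger-Moser inequality) There is a finite constant C such that for every u ∈ H_0^1(B) with ∫_B |∇u|² dx ≤ 1, one has ∫_B (e^{4π u²} - 1) dx/(1-|x|²)² ≤ C. -/
open MeasureTheory Real Filter Set Metric
open scoped Topology RealInnerProductSpace ENNReal

noncomputable section

/-- The open unit disk in `ℂ`. -/
def unitDisk : Set ℂ := {z : ℂ | ‖z‖ < 1}

/-- The Möbius transformation `η_ζ(z) = (z - ζ)/(1 - conj(ζ)·z)`. -/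
def eta (ζ z : ℂ) : ℂ := (z - ζ) / (1 - (starRingEnd ℂ) ζ * z)

/-!
Write `μ` for the hyperbolic measure `dx / (1 - |x|²)²` of the disk. Integrating `u` along the
geodesics issuing from a point `x` and using that Möbius maps preserve `μ`, a level gap
`(s₂ - s₁) · μ {|u| ≥ s₂}` is bounded by the integral over `{s₁ < |u| < s₂}` of the hyperbolic
gradient of `u` against the gradient of the Green function. By Cauchy–Schwarz, after the kernel is
split at the radius of a disk of area comparable to that of the superlevel set, this becomes the
capacity estimate `4π (s₂ - s₁)² ≤ D (log μ {|u| ≥ s₁} - log μ {|u| ≥ s₂} + C)` with the sharp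
constant `4π`, where `D` is the Dirichlet energy of `u` on the band; no rearrangement is needed.

The same estimate with `s₁ = 0` shows that if `exp (4πs²) μ {|u| ≥ s}` is not small, then the band
`{|u| < s}` uses up almost all of the unit energy. Hence two levels at which this weighted area is
not small must be close to each other, so that the weighted areas at the levels `4πs² = n` decay
quadratically away from their maximum and have a bounded sum. This controls the integral over large
values of `u`; over small values the integrand is dominated by `u²`, and the Hardy inequality
`∫ u² dμ ≤ ∫ |∇u|²` applies.
-/

/-! ### Möbius transformations of the disk -/

theorem one_sub_sq_norm_pos {E : Type*} [SeminormedAddGroup E] {x : E} (hx : ‖x‖ < 1) :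
    0 < 1 - ‖x‖ ^ 2 := by
  nlinarith [norm_nonneg x]

theorem measurableSet_unitDisk : MeasurableSet unitDisk :=
  measurableSet_lt measurable_norm measurable_const

theorem one_sub_conj_mul_ne_zero {ζ z : ℂ} (hζ : ‖ζ‖ < 1) (hz : ‖z‖ ≤ 1) :
    1 - (starRingEnd ℂ) ζ * z ≠ 0 := by
  intro h
  have hnorm : ‖ζ‖ * ‖z‖ = 1 := by
    rw [← RCLike.norm_conj ζ, ← norm_mul, (sub_eq_zero.mp h).symm, norm_one]
  nlinarith [norm_nonneg ζ, norm_nonneg z]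

theorem one_sub_norm_eta_sq {ζ z : ℂ} (hζ : ‖ζ‖ < 1) (hz : ‖z‖ ≤ 1) :
    1 - ‖eta ζ z‖ ^ 2 =
      (1 - ‖ζ‖ ^ 2) * (1 - ‖z‖ ^ 2) / ‖1 - (starRingEnd ℂ) ζ * z‖ ^ 2 := by
  have hden : ‖1 - (starRingEnd ℂ) ζ * z‖ ^ 2 ≠ 0 := by
    simpa using one_sub_conj_mul_ne_zero hζ hz
  rw [eta, norm_div, div_pow, eq_div_iff hden, sub_mul, div_mul_cancel₀ _ hden]
  simp only [Complex.sq_norm, Complex.normSq_apply, Complex.sub_re, Complex.sub_im, Complex.mul_re,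
    Complex.mul_im, Complex.one_re, Complex.one_im, Complex.conj_re, Complex.conj_im]
  ring

theorem norm_eta_lt_one {ζ z : ℂ} (hζ : ‖ζ‖ < 1) (hz : ‖z‖ < 1) : ‖eta ζ z‖ < 1 := by
  have hden := norm_pos_iff.mpr (one_sub_conj_mul_ne_zero hζ hz.le)
  have hpos : 0 < 1 - ‖eta ζ z‖ ^ 2 := by
    rw [one_sub_norm_eta_sq hζ hz.le]
    exact div_pos (mul_pos (one_sub_sq_norm_pos hζ) (one_sub_sq_norm_pos hz)) (pow_pos hden 2)
  exact (sq_lt_one_iff₀ (norm_nonneg _)).mp (sub_pos.mp hpos)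

theorem norm_eta_eq_one {ζ z : ℂ} (hζ : ‖ζ‖ < 1) (hz : ‖z‖ = 1) : ‖eta ζ z‖ = 1 := by
  have h : 1 - ‖eta ζ z‖ ^ 2 = 0 := by simp [one_sub_norm_eta_sq hζ hz.le, hz]
  exact (pow_eq_one_iff_of_nonneg (norm_nonneg _) two_ne_zero).mp (sub_eq_zero.mp h).symm

theorem norm_eta_comm (ζ z : ℂ) : ‖eta ζ z‖ = ‖eta z ζ‖ := by
  have hden : ‖1 - (starRingEnd ℂ) ζ * z‖ = ‖1 - (starRingEnd ℂ) z * ζ‖ := by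
    rw [← RCLike.norm_conj]
    simp [mul_comm]
  rw [eta, eta, norm_div, norm_div, norm_sub_rev, hden]

theorem eta_neg_eta {ζ z : ℂ} (hζ : ‖ζ‖ < 1) (hz : ‖z‖ < 1) : eta (-ζ) (eta ζ z) = z := by
  have hden := one_sub_conj_mul_ne_zero hζ hz.le
  have hden' := one_sub_conj_mul_ne_zero (ζ := -ζ) (by simpa using hζ) (norm_eta_lt_one hζ hz).le
  rw [eta, div_eq_iff hden', eta]
  have hden'' : 1 - z * (starRingEnd ℂ) ζ ≠ 0 := by rwa [mul_comm]
  simp only [map_neg]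
  field_simp
  ring

theorem image_eta_unitDisk {ζ : ℂ} (hζ : ‖ζ‖ < 1) : eta ζ '' unitDisk = unitDisk := by
  have hζ' : ‖-ζ‖ < 1 := by simpa using hζ
  refine Subset.antisymm (image_subset_iff.mpr fun w hw => norm_eta_lt_one hζ hw) fun z hz => ?_
  exact ⟨eta (-ζ) z, norm_eta_lt_one hζ' hz, by simpa using eta_neg_eta hζ' hz⟩

theorem injOn_eta {ζ : ℂ} (hζ : ‖ζ‖ < 1) : InjOn (eta ζ) unitDisk :=
  LeftInvOn.injOn fun _ hz => eta_neg_eta hζ hz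

theorem measurable_eta_uncurry : Measurable (Function.uncurry eta) := by
  have : Measurable (starRingEnd ℂ : ℂ → ℂ) := Complex.continuous_conj.measurable
  unfold eta Function.uncurry
  fun_prop

theorem measurable_eta (ζ : ℂ) : Measurable (eta ζ) :=
  measurable_eta_uncurry.comp measurable_prodMk_left

theorem hasDerivAt_eta {ζ z : ℂ} (hζ : ‖ζ‖ < 1) (hz : ‖z‖ ≤ 1) :
    HasDerivAt (eta ζ) (((1 - ‖ζ‖ ^ 2 : ℝ) : ℂ) / (1 - (starRingEnd ℂ) ζ * z) ^ 2) z := by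
  have hnum : HasDerivAt (fun w : ℂ => w - ζ) 1 z := (hasDerivAt_id z).sub_const ζ
  have hden : HasDerivAt (fun w : ℂ => 1 - (starRingEnd ℂ) ζ * w) (-((starRingEnd ℂ) ζ)) z := by
    simpa using ((hasDerivAt_id z).const_mul ((starRingEnd ℂ) ζ)).const_sub 1
  refine (hnum.fun_div hden (one_sub_conj_mul_ne_zero hζ hz)).congr_deriv ?_
  congr 1
  push_cast
  rw [← Complex.conj_mul']
  ring

theorem contDiffAt_eta {n : WithTop ℕ∞} {ζ z : ℂ} (hζ : ‖ζ‖ < 1) (hz : ‖z‖ ≤ 1) :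
    ContDiffAt ℂ n (eta ζ) z :=
  (contDiffAt_id.sub contDiffAt_const).div
    (contDiffAt_const.sub (contDiffAt_const.mul contDiffAt_id)) (one_sub_conj_mul_ne_zero hζ hz)

-- Equality in the Schwarz–Pick lemma: `η_ζ` is an isometry of the metric `|dz| / (1 - |z|²)`.
theorem norm_deriv_eta {ζ z : ℂ} (hζ : ‖ζ‖ < 1) (hz : ‖z‖ < 1) :
    ‖deriv (eta ζ) z‖ = (1 - ‖eta ζ z‖ ^ 2) / (1 - ‖z‖ ^ 2) := by
  have hz' := (one_sub_sq_norm_pos hz).ne'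
  rw [(hasDerivAt_eta hζ hz.le).deriv, norm_div, norm_pow, Complex.norm_real,
    Real.norm_of_nonneg (one_sub_sq_norm_pos hζ).le, one_sub_norm_eta_sq hζ hz.le]
  field_simp

/-! ### The hyperbolic measure -/

/-- The measure `dx / (1 - |x|²)²` on the unit disk, extended by zero to `ℂ`. It is a quarter of
the hyperbolic area. -/
def hyperbolicMeasure : Measure ℂ :=
  (volume.restrict unitDisk).withDensity fun z => ENNReal.ofReal ((1 - ‖z‖ ^ 2) ^ 2)⁻¹

instance : SFinite hyperbolicMeasure := by unfold hyperbolicMeasure; infer_instance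

theorem lintegral_hyperbolicMeasure {F : ℂ → ℝ≥0∞} (hF : Measurable F) :
    ∫⁻ z, F z ∂hyperbolicMeasure =
      ∫⁻ z in unitDisk, ENNReal.ofReal ((1 - ‖z‖ ^ 2) ^ 2)⁻¹ * F z := by
  rw [hyperbolicMeasure, lintegral_withDensity_eq_lintegral_mul _ (by fun_prop) hF]
  rfl

theorem ae_hyperbolicMeasure_norm_lt_one : ∀ᵐ z ∂hyperbolicMeasure, ‖z‖ < 1 :=
  (withDensity_absolutelyContinuous _ _).ae_le (ae_restrict_mem measurableSet_unitDisk)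

theorem det_smul_one_complex (c : ℂ) :
    (c • (1 : ℂ →L[ℝ] ℂ)).det = ‖c‖ ^ 2 := by
  have : ((c • (1 : ℂ →L[ℝ] ℂ) : ℂ →L[ℝ] ℂ) : ℂ →ₗ[ℝ] ℂ) = LinearMap.mulLeft ℝ c := by
    ext; simp
  rw [ContinuousLinearMap.det, this, ← Complex.normSq_eq_norm_sq, ← Algebra.norm_complex_apply]
  rfl

theorem lintegral_unitDisk_comp_eta {ζ : ℂ} (hζ : ‖ζ‖ < 1) (F : ℂ → ℝ≥0∞) :
    ∫⁻ z in unitDisk, ENNReal.ofReal (‖deriv (eta ζ) z‖ ^ 2) * F (eta ζ z) =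
      ∫⁻ z in unitDisk, F z := by
  have hderiv (z : ℂ) (hz : z ∈ unitDisk) :
      HasFDerivWithinAt (eta ζ) (deriv (eta ζ) z • (1 : ℂ →L[ℝ] ℂ)) unitDisk z :=
    (hasDerivAt_eta hζ (le_of_lt hz)).differentiableAt.hasDerivAt.complexToReal_fderiv
      |>.hasFDerivWithinAt
  conv_rhs => rw [← image_eta_unitDisk hζ, lintegral_image_eq_lintegral_abs_det_fderiv_mul volume
    measurableSet_unitDisk hderiv (injOn_eta hζ) F]
  simp only [det_smul_one_complex, abs_pow, abs_norm]

theorem measurePreserving_eta {ζ : ℂ} (hζ : ‖ζ‖ < 1) :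
    MeasurePreserving (eta ζ) hyperbolicMeasure hyperbolicMeasure := by
  refine ⟨measurable_eta ζ, Measure.ext_of_lintegral _ fun F hF => ?_⟩
  rw [lintegral_map hF (measurable_eta ζ),
    lintegral_hyperbolicMeasure (F := fun z => F (eta ζ z)) (hF.comp (measurable_eta ζ)),
    lintegral_hyperbolicMeasure hF,
    ← lintegral_unitDisk_comp_eta hζ fun z => ENNReal.ofReal ((1 - ‖z‖ ^ 2) ^ 2)⁻¹ * F z]
  refine setLIntegral_congr_fun measurableSet_unitDisk fun z hz => ?_
  have hz' := one_sub_sq_norm_pos hz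
  have hη := one_sub_sq_norm_pos (norm_eta_lt_one hζ hz)
  simp only [norm_deriv_eta hζ hz, ← mul_assoc]
  rw [← ENNReal.ofReal_mul (by positivity)]
  congr 2
  field_simp

theorem lintegral_hyperbolicMeasure_polar {F : ℂ → ℝ≥0∞} (hF : Measurable F) :
    ∫⁻ z, F z ∂hyperbolicMeasure = ∫⁻ θ in Ioo (-π) π, ∫⁻ r in Ioo (0 : ℝ) 1,
      ENNReal.ofReal (r / (1 - r ^ 2) ^ 2) * F (r * Complex.exp (θ * Complex.I)) := by
  have hpolar (p : ℝ × ℝ) :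
      Complex.polarCoord.symm p = p.1 * Complex.exp (p.2 * Complex.I) := by
    rw [Complex.polarCoord_symm_apply, Complex.exp_mul_I, Complex.ofReal_cos, Complex.ofReal_sin]
  set G : ℂ → ℝ≥0∞ := unitDisk.indicator fun z => ENNReal.ofReal ((1 - ‖z‖ ^ 2) ^ 2)⁻¹ * F z
  have hG : Measurable G := Measurable.indicator (by fun_prop) measurableSet_unitDisk
  have hmeas : Measurable fun p : ℝ × ℝ => ENNReal.ofReal p.1 • G (Complex.polarCoord.symm p) := by
    simp only [hpolar]
    fun_prop
  rw [lintegral_hyperbolicMeasure hF, ← lintegral_indicator measurableSet_unitDisk,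
    ← Complex.lintegral_comp_polarCoord_symm, polarCoord_target, Measure.volume_eq_prod,
    ← Measure.prod_restrict, lintegral_prod_symm' _ hmeas]
  refine lintegral_congr fun θ => ?_
  have hIoo : Ioi (0 : ℝ) ∩ Iio 1 = Ioo 0 1 := Ioi_inter_Iio
  rw [← hIoo, inter_comm, ← setLIntegral_indicator measurableSet_Iio]
  refine setLIntegral_congr_fun measurableSet_Ioi fun r (hr : 0 < r) => ?_
  have hnorm : ‖(r : ℂ) * Complex.exp (θ * Complex.I)‖ = r := by simp [abs_of_pos hr]
  simp only [hpolar, G, indicator_apply, unitDisk, mem_ofPred_eq, hnorm, mem_Iio, smul_eq_mul]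
  split_ifs
  · rw [← mul_assoc, ← ENNReal.ofReal_mul hr.le, div_eq_mul_inv]
  · simp

theorem setLIntegral_hyperbolicMeasure_radial {F : ℝ → ℝ≥0∞} (hF : Measurable F) {s : Set ℝ}
    (hs : MeasurableSet s) :
    ∫⁻ z in norm ⁻¹' s, F ‖z‖ ∂hyperbolicMeasure = ENNReal.ofReal (2 * π) *
      ∫⁻ r in s ∩ Ioo 0 1, ENNReal.ofReal (r / (1 - r ^ 2) ^ 2) * F r := by
  have hcircle (θ : ℝ) : ∫⁻ r in Ioo (0 : ℝ) 1, ENNReal.ofReal (r / (1 - r ^ 2) ^ 2) *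
        s.indicator F ‖(r : ℂ) * Complex.exp (θ * Complex.I)‖ =
      ∫⁻ r in s ∩ Ioo 0 1, ENNReal.ofReal (r / (1 - r ^ 2) ^ 2) * F r := by
    rw [← setLIntegral_indicator hs]
    refine setLIntegral_congr_fun measurableSet_Ioo fun r hr => ?_
    by_cases hrs : r ∈ s <;> simp [abs_of_pos hr.1, hrs]
  rw [← lintegral_indicator (measurable_norm hs)]
  change ∫⁻ z : ℂ, s.indicator F ‖z‖ ∂hyperbolicMeasure = _
  rw [lintegral_hyperbolicMeasure_polar (F := fun z => s.indicator F ‖z‖)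
    ((hF.indicator hs).comp measurable_norm)]
  simp only [hcircle, lintegral_const, Measure.restrict_apply_univ,
    Real.volume_Ioo]
  rw [mul_comm, sub_neg_eq_add, two_mul]

/-! ### Green representation of level gaps -/

/-- The length of the hyperbolic gradient of the Green function of the disk, as a function of the
pseudo-hyperbolic distance `ρ` to the pole. -/
def greenKernel (ρ : ℝ) : ℝ := (1 - ρ ^ 2) / (2 * π * ρ)

/-- The length of the gradient of `u` for the metric `|dz| / (1 - |z|²)` of the disk. -/
def hyperbolicGradientNorm (u : ℂ → ℝ) (z : ℂ) : ℝ≥0∞ :=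
  ENNReal.ofReal (1 - ‖z‖ ^ 2) * ‖fderiv ℝ u z‖ₑ

/-- The set where `|u|` lies strictly between the levels `s₁` and `s₂`. -/
def levelBand {α : Type*} (u : α → ℝ) (s₁ s₂ : ℝ) : Set α := {y | s₁ < |u y| ∧ |u y| < s₂}

/-- The set where `|u|` is at least `s`. -/
def superlevel {α : Type*} (u : α → ℝ) (s : ℝ) : Set α := {y | s ≤ |u y|}

theorem measurable_greenKernel : Measurable greenKernel := by unfold greenKernel; fun_prop

theorem measurable_hyperbolicGradientNorm (u : ℂ → ℝ) : Measurable (hyperbolicGradientNorm u) :=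
  (by fun_prop : Measurable fun z : ℂ => ENNReal.ofReal (1 - ‖z‖ ^ 2)).mul
    (measurable_fderiv ℝ u).enorm

theorem measurableSet_levelBand {α : Type*} [MeasurableSpace α] {u : α → ℝ} (hu : Measurable u)
    (s₁ s₂ : ℝ) : MeasurableSet (levelBand u s₁ s₂) :=
  hu.abs measurableSet_Ioo

theorem measurableSet_superlevel {α : Type*} [MeasurableSpace α] {u : α → ℝ} (hu : Measurable u)
    (s : ℝ) : MeasurableSet (superlevel u s) :=
  hu.abs measurableSet_Ici

theorem levelBand_subset_superlevel {α : Type*} (u : α → ℝ) (s₁ s₂ : ℝ) :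
    levelBand u s₁ s₂ ⊆ superlevel u s₁ := fun _ hy => hy.1.le

theorem superlevel_anti {α : Type*} (u : α → ℝ) : Antitone (superlevel u) :=
  fun _ _ hs _ hy => hs.trans hy

-- `d` is the first time `|g|` is at most `s₁`, and `c` the last time before it is at least `s₂`.
theorem exists_Ioo_subset_levelBand {g : ℝ → ℝ} {a b s₁ s₂ : ℝ} (hab : a ≤ b)
    (hg : ContinuousOn g (Icc a b)) (ha : s₂ ≤ |g a|) (hb : |g b| ≤ s₁) :
    ∃ c d, a ≤ c ∧ c ≤ d ∧ d ≤ b ∧ s₂ ≤ |g c| ∧ |g d| ≤ s₁ ∧ Ioo c d ⊆ levelBand g s₁ s₂ := by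
  have hlow : IsCompact (Icc a b ∩ (fun r => |g r|) ⁻¹' Iic s₁) :=
    isCompact_Icc.of_isClosed_subset
      (hg.abs.preimage_isClosed_of_isClosed isClosed_Icc isClosed_Iic) inter_subset_left
  obtain ⟨d, ⟨hd, hds⟩, hdmin⟩ := hlow.exists_isLeast ⟨b, right_mem_Icc.mpr hab, hb⟩
  have hhigh : IsCompact (Icc a d ∩ (fun r => |g r|) ⁻¹' Ici s₂) :=
    isCompact_Icc.of_isClosed_subset ((hg.mono (Icc_subset_Icc_right hd.2)).abs
      |>.preimage_isClosed_of_isClosed isClosed_Icc isClosed_Ici) inter_subset_left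
  obtain ⟨c, ⟨hc, hcs⟩, hcmax⟩ := hhigh.exists_isGreatest ⟨a, left_mem_Icc.mpr hd.1, ha⟩
  refine ⟨c, d, hc.1, hc.2, hd.2, hcs, hds, fun r hr => ⟨?_, ?_⟩⟩
  · by_contra! h
    exact hr.2.not_ge (hdmin ⟨⟨hc.1.trans hr.1.le, hr.2.le.trans hd.2⟩, h⟩)
  · by_contra! h
    exact hr.1.not_ge (hcmax ⟨⟨hc.1.trans hr.1.le, hr.2.le⟩, h⟩)

theorem ofReal_sub_le_lintegral_deriv_levelBand {g : ℝ → ℝ} {a b s₁ s₂ : ℝ} (hab : a ≤ b)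
    (hg : ContDiffOn ℝ 1 g (Icc a b)) (ha : s₂ ≤ |g a|) (hb : |g b| ≤ s₁) :
    ENNReal.ofReal (s₂ - s₁) ≤ ∫⁻ r in Ioo a b, (levelBand g s₁ s₂).indicator (‖deriv g ·‖ₑ) r := by
  obtain ⟨c, d, hac, hcd, hdb, hcs, hds, hband⟩ :=
    exists_Ioo_subset_levelBand hab hg.continuousOn ha hb
  calc ENNReal.ofReal (s₂ - s₁) ≤ ‖g d - g c‖ₑ := by
        rw [Real.enorm_eq_ofReal_abs, abs_sub_comm]
        exact ENNReal.ofReal_le_ofReal (by linarith [abs_sub_abs_le_abs_sub (g c) (g d)])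
    _ ≤ ∫⁻ r in Icc c d, ‖deriv g r‖ₑ :=
        enorm_sub_le_lintegral_deriv_of_contDiffOn_Icc (hg.mono (Icc_subset_Icc hac hdb)) hcd
    _ = ∫⁻ r in Ioo c d, ‖deriv g r‖ₑ := by rw [restrict_Ioo_eq_restrict_Icc]
    _ = ∫⁻ r in Ioo c d, (levelBand g s₁ s₂).indicator (‖deriv g ·‖ₑ) r :=
        setLIntegral_congr_fun measurableSet_Ioo fun r hr => by
          simp only [indicator_of_mem (hband hr)]
    _ ≤ _ := lintegral_mono_set (Ioo_subset_Ioo hac hdb)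

theorem ofReal_sub_le_lintegral_ray {E : Type*} [NormedAddCommGroup E] [NormedSpace ℝ E]
    {v : E → ℝ} (hv : ∀ z, ‖z‖ ≤ 1 → ContDiffAt ℝ 1 v z) (hv₀ : ∀ z, ‖z‖ = 1 → v z = 0)
    {s₁ s₂ : ℝ} (hs₁ : 0 ≤ s₁) (hs₂ : s₂ ≤ |v 0|) {ω : E} (hω : ‖ω‖ = 1) :
    ENNReal.ofReal (s₂ - s₁) ≤
      ∫⁻ r in Ioo (0 : ℝ) 1, (levelBand v s₁ s₂).indicator (‖fderiv ℝ v ·‖ₑ) (r • ω) := by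
  have hnorm {r : ℝ} (hr : r ∈ Icc 0 1) : ‖r • ω‖ ≤ 1 := by
    simpa [norm_smul, hω, abs_of_nonneg hr.1] using hr.2
  have hray : ContDiff ℝ 1 fun r : ℝ => r • ω := contDiff_id.smul contDiff_const
  have hg : ContDiffOn ℝ 1 (fun r : ℝ => v (r • ω)) (Icc 0 1) := fun r hr =>
    ((hv _ (hnorm hr)).comp r hray.contDiffAt).contDiffWithinAt
  refine (ofReal_sub_le_lintegral_deriv_levelBand zero_le_one hg (by simpa using hs₂)
    (by simpa [hv₀ ω hω] using hs₁)).trans (setLIntegral_mono' measurableSet_Ioo fun r hr => ?_)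
  have hderiv : HasDerivAt (fun r : ℝ => v (r • ω)) (fderiv ℝ v (r • ω) ω) r := by
    have hid : HasDerivAt (fun r : ℝ => r • ω) ω r := by
      simpa using (hasDerivAt_id r).smul_const ω
    exact ((hv _ (hnorm ⟨hr.1.le, hr.2.le⟩)).differentiableAt one_ne_zero).hasFDerivAt
      |>.comp_hasDerivAt r hid
  by_cases hmem : r • ω ∈ levelBand v s₁ s₂
  · rw [indicator_of_mem hmem, indicator_of_mem (show r ∈ levelBand (fun r => v (r • ω)) s₁ s₂
      from hmem), hderiv.deriv, enorm_le_iff_norm_le]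
    simpa [hω] using (fderiv ℝ v (r • ω)).le_opNorm ω
  · rw [indicator_of_notMem (show r ∉ levelBand (fun r => v (r • ω)) s₁ s₂ from hmem)]
    exact zero_le

theorem ofReal_sub_le_lintegral_greenKernel_zero {v : ℂ → ℝ} (hvm : Measurable v)
    (hv : ∀ z, ‖z‖ ≤ 1 → ContDiffAt ℝ 1 v z) (hv₀ : ∀ z, ‖z‖ = 1 → v z = 0)
    {s₁ s₂ : ℝ} (hs₁ : 0 ≤ s₁) (hs₂ : s₂ ≤ |v 0|) :
    ENNReal.ofReal (s₂ - s₁) ≤ ∫⁻ z in levelBand v s₁ s₂,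
      ENNReal.ofReal (greenKernel ‖z‖) * hyperbolicGradientNorm v z ∂hyperbolicMeasure := by
  have hA := measurableSet_levelBand hvm s₁ s₂
  have hradial {r θ : ℝ} (hr : r ∈ Ioo 0 1) :
      ENNReal.ofReal (r / (1 - r ^ 2) ^ 2) * (levelBand v s₁ s₂).indicator
          (fun z => ENNReal.ofReal (greenKernel ‖z‖) * hyperbolicGradientNorm v z)
          (r * Complex.exp (θ * Complex.I)) =
        ENNReal.ofReal (1 / (2 * π)) * (levelBand v s₁ s₂).indicator (‖fderiv ℝ v ·‖ₑ)
          (r • Complex.exp (θ * Complex.I)) := by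
    have hr₀ := hr.1
    have hr₁ : 0 < 1 - r ^ 2 := by nlinarith [hr.1, hr.2]
    have hnorm : ‖(r : ℂ) * Complex.exp (θ * Complex.I)‖ = r := by simp [abs_of_pos hr.1]
    rw [Complex.real_smul]
    by_cases hmem : (r : ℂ) * Complex.exp (θ * Complex.I) ∈ levelBand v s₁ s₂
    · simp only [indicator_of_mem hmem, hyperbolicGradientNorm, hnorm, greenKernel]
      rw [← mul_assoc, ← mul_assoc, ← ENNReal.ofReal_mul (by positivity),
        ← ENNReal.ofReal_mul (by positivity)]
      congr 2
      field_simp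
    · simp only [indicator_of_notMem hmem, mul_zero]
  have hmeas : Measurable fun z => ENNReal.ofReal (greenKernel ‖z‖) * hyperbolicGradientNorm v z :=
    (measurable_greenKernel.comp measurable_norm).ennreal_ofReal.mul
      (measurable_hyperbolicGradientNorm v)
  rw [← lintegral_indicator hA, lintegral_hyperbolicMeasure_polar (hmeas.indicator hA)]
  calc ENNReal.ofReal (s₂ - s₁)
      = ∫⁻ _ in Ioo (-π) π, ENNReal.ofReal (1 / (2 * π)) * ENNReal.ofReal (s₂ - s₁) := by
        rw [setLIntegral_const, Real.volume_Ioo, mul_right_comm,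
          ← ENNReal.ofReal_mul (by positivity), sub_neg_eq_add, ← two_mul,
          one_div_mul_cancel (by positivity), ENNReal.ofReal_one, one_mul]
    _ ≤ _ := lintegral_mono fun θ => by
        rw [setLIntegral_congr_fun measurableSet_Ioo fun r hr => hradial hr,
          lintegral_const_mul' _ _ ENNReal.ofReal_ne_top]
        gcongr
        exact ofReal_sub_le_lintegral_ray hv hv₀ hs₁ hs₂ (Complex.norm_exp_ofReal_mul_I θ)

theorem hyperbolicGradientNorm_comp_eta_le {u : ℂ → ℝ} {ζ z : ℂ} (hζ : ‖ζ‖ < 1) (hz : ‖z‖ < 1)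
    (hu : DifferentiableAt ℝ u (eta ζ z)) :
    hyperbolicGradientNorm (u ∘ eta ζ) z ≤ hyperbolicGradientNorm u (eta ζ z) := by
  have hz' := one_sub_sq_norm_pos hz
  have hη : HasFDerivAt (eta ζ) (deriv (eta ζ) z • (1 : ℂ →L[ℝ] ℂ)) z :=
    (hasDerivAt_eta hζ hz.le).differentiableAt.hasDerivAt.complexToReal_fderiv
  have hchain : ‖fderiv ℝ (u ∘ eta ζ) z‖ ≤ ‖fderiv ℝ u (eta ζ z)‖ * ‖deriv (eta ζ) z‖ := by
    rw [(hu.hasFDerivAt.comp z hη).fderiv]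
    refine (ContinuousLinearMap.opNorm_comp_le _ _).trans_eq ?_
    rw [norm_smul, norm_one, mul_one]
  simp only [hyperbolicGradientNorm, ← ofReal_norm]
  rw [← ENNReal.ofReal_mul hz'.le,
    ← ENNReal.ofReal_mul (one_sub_sq_norm_pos (norm_eta_lt_one hζ hz)).le]
  refine ENNReal.ofReal_le_ofReal ((mul_le_mul_of_nonneg_left hchain hz'.le).trans_eq ?_)
  rw [norm_deriv_eta hζ hz]
  field_simp

theorem ofReal_sub_le_lintegral_greenKernel {u : ℂ → ℝ} (hu : ContDiff ℝ 1 u)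
    (hsupp : Function.support u ⊆ unitDisk) {x : ℂ} (hx : ‖x‖ < 1) {s₁ s₂ : ℝ} (hs₁ : 0 ≤ s₁)
    (hs₂ : s₂ ≤ |u x|) :
    ENNReal.ofReal (s₂ - s₁) ≤ ∫⁻ y in levelBand u s₁ s₂,
      ENNReal.ofReal (greenKernel ‖eta x y‖) * hyperbolicGradientNorm u y ∂hyperbolicMeasure := by
  have hx' : ‖-x‖ < 1 := by simpa using hx
  have hum := hu.continuous.measurable
  have hregular (z : ℂ) (hz : ‖z‖ ≤ 1) : ContDiffAt ℝ 1 (u ∘ eta (-x)) z :=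
    hu.contDiffAt.comp z ((contDiffAt_eta hx' hz).restrict_scalars ℝ)
  have hboundary (z : ℂ) (hz : ‖z‖ = 1) : (u ∘ eta (-x)) z = 0 :=
    Function.notMem_support.mp fun h => (hsupp h).ne (norm_eta_eq_one hx' hz)
  have hmeas : Measurable fun y =>
      ENNReal.ofReal (greenKernel ‖eta x y‖) * hyperbolicGradientNorm u y :=
    (measurable_greenKernel.comp (measurable_eta x).norm).ennreal_ofReal.mul
      (measurable_hyperbolicGradientNorm u)
  calc ENNReal.ofReal (s₂ - s₁)
      ≤ ∫⁻ z in levelBand (u ∘ eta (-x)) s₁ s₂, ENNReal.ofReal (greenKernel ‖z‖) *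
          hyperbolicGradientNorm (u ∘ eta (-x)) z ∂hyperbolicMeasure :=
        ofReal_sub_le_lintegral_greenKernel_zero (hum.comp (measurable_eta _)) hregular hboundary
          hs₁ (by simpa [eta] using hs₂)
    _ ≤ ∫⁻ z in eta (-x) ⁻¹' levelBand u s₁ s₂, ENNReal.ofReal (greenKernel ‖eta x (eta (-x) z)‖) *
          hyperbolicGradientNorm u (eta (-x) z) ∂hyperbolicMeasure := by
        refine lintegral_mono_ae (ae_restrict_of_ae ?_)
        filter_upwards [ae_hyperbolicMeasure_norm_lt_one] with z hz
        rw [show eta x (eta (-x) z) = z by simpa using eta_neg_eta hx' hz]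
        gcongr
        exact hyperbolicGradientNorm_comp_eta_le hx' hz (hu.differentiable one_ne_zero _)
    _ = _ := (measurePreserving_eta hx').setLIntegral_comp_preimage
        (measurableSet_levelBand hum s₁ s₂) hmeas

theorem greenKernel_nonneg {ρ : ℝ} (h₀ : 0 ≤ ρ) (h₁ : ρ ≤ 1) : 0 ≤ greenKernel ρ :=
  div_nonneg (by nlinarith) (by positivity)

theorem antitoneOn_greenKernel : AntitoneOn greenKernel (Ioc 0 1) := by
  intro r hr ρ _ hrρ
  have hr₀ : 0 < r := hr.1
  have : 0 ≤ 1 - r ^ 2 := by nlinarith [hr.1, hr.2]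
  unfold greenKernel
  gcongr

theorem greenKernel_le {ρ : ℝ} (h₀ : 0 < ρ) : greenKernel ρ ≤ 1 / (2 * π * ρ) := by
  unfold greenKernel
  gcongr
  nlinarith

/-! ### The energy between two levels -/

/-- The part of the Green kernel at pseudo-hyperbolic distance less than `r₀` from the pole. It is
integrable but not square integrable. -/
def nearGreenKernel (r₀ : ℝ) : ℝ → ℝ≥0∞ :=
  (Iio r₀).indicator fun ρ => ENNReal.ofReal (greenKernel ρ)

/-- The part of the Green kernel at pseudo-hyperbolic distance at least `r₀` from the pole. It is
square integrable, and its square integral over an annulus is logarithmic. -/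
def farGreenKernel (r₀ : ℝ) : ℝ → ℝ≥0∞ :=
  (Ici r₀).indicator fun ρ => ENNReal.ofReal (greenKernel ρ)

/-- The Dirichlet integral of `u` over `A`. -/
def dirichletEnergy (u : ℂ → ℝ) (A : Set ℂ) : ℝ≥0∞ := ∫⁻ z in A, ‖fderiv ℝ u z‖ₑ ^ 2

theorem measurable_nearGreenKernel (r₀ : ℝ) : Measurable (nearGreenKernel r₀) :=
  measurable_greenKernel.ennreal_ofReal.indicator measurableSet_Iio

theorem measurable_farGreenKernel (r₀ : ℝ) : Measurable (farGreenKernel r₀) :=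
  measurable_greenKernel.ennreal_ofReal.indicator measurableSet_Ici

theorem nearGreenKernel_add_farGreenKernel (r₀ ρ : ℝ) :
    nearGreenKernel r₀ ρ + farGreenKernel r₀ ρ = ENNReal.ofReal (greenKernel ρ) := by
  rw [nearGreenKernel, farGreenKernel, ← compl_Iio, indicator_self_add_compl_apply]

theorem farGreenKernel_le {r₀ : ℝ} (h₀ : 0 < r₀) (ρ : ℝ) :
    farGreenKernel r₀ ρ ≤ ENNReal.ofReal (1 / (2 * π * r₀)) := by
  refine indicator_apply_le' (fun (hρ : r₀ ≤ ρ) => ENNReal.ofReal_le_ofReal ?_) fun _ => zero_le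
  refine (greenKernel_le (h₀.trans_le hρ)).trans ?_
  gcongr

theorem lintegral_comp_norm_eta {F : ℝ → ℝ≥0∞} (hF : Measurable F) {x : ℂ} (hx : ‖x‖ < 1) :
    ∫⁻ y, F ‖eta x y‖ ∂hyperbolicMeasure = ∫⁻ z, F ‖z‖ ∂hyperbolicMeasure :=
  (measurePreserving_eta hx).lintegral_comp (hF.comp measurable_norm)

theorem lintegral_nearGreenKernel_le {r₀ : ℝ} (h₀ : r₀ ≤ 1 / 2) :
    ∫⁻ z, nearGreenKernel r₀ ‖z‖ ∂hyperbolicMeasure ≤ ENNReal.ofReal (4 / 3 * r₀) := by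
  have hdensity (r : ℝ) (hr : r ∈ Ioo 0 r₀) :
      ENNReal.ofReal (r / (1 - r ^ 2) ^ 2) * ENNReal.ofReal (greenKernel r) ≤
        ENNReal.ofReal (4 / 3 / (2 * π)) := by
    have hr₀ := hr.1
    have hr₁ : 3 / 4 ≤ 1 - r ^ 2 := by nlinarith [hr.1, hr.2]
    have : 0 < 1 - r ^ 2 := by linarith
    rw [← ENNReal.ofReal_mul (by positivity)]
    refine ENNReal.ofReal_le_ofReal ?_
    calc r / (1 - r ^ 2) ^ 2 * greenKernel r = 1 / (1 - r ^ 2) / (2 * π) := by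
          unfold greenKernel
          field_simp
      _ ≤ 1 / (3 / 4) / (2 * π) := by gcongr
      _ = 4 / 3 / (2 * π) := by norm_num
  calc ∫⁻ z, nearGreenKernel r₀ ‖z‖ ∂hyperbolicMeasure
      = ∫⁻ z in norm ⁻¹' Iio r₀, ENNReal.ofReal (greenKernel ‖z‖) ∂hyperbolicMeasure :=
        lintegral_indicator (measurable_norm measurableSet_Iio) _
    _ = ENNReal.ofReal (2 * π) * ∫⁻ r in Iio r₀ ∩ Ioo 0 1,
          ENNReal.ofReal (r / (1 - r ^ 2) ^ 2) * ENNReal.ofReal (greenKernel r) :=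
        setLIntegral_hyperbolicMeasure_radial measurable_greenKernel.ennreal_ofReal
          measurableSet_Iio
    _ ≤ ENNReal.ofReal (2 * π) * ∫⁻ _ in Ioo 0 r₀, ENNReal.ofReal (4 / 3 / (2 * π)) := by
        have hsub : Iio r₀ ∩ Ioo 0 1 ⊆ Ioo 0 r₀ := fun r hr => ⟨hr.2.1, hr.1⟩
        exact mul_le_mul_right ((lintegral_mono_set hsub).trans
          (setLIntegral_mono' measurableSet_Ioo hdensity)) _
    _ = ENNReal.ofReal (4 / 3 * r₀) := by
        rw [setLIntegral_const, Real.volume_Ioo, ← ENNReal.ofReal_mul (by positivity),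
          ← ENNReal.ofReal_mul (by positivity), sub_zero]
        congr 1
        field_simp

theorem lintegral_annulus_greenKernel_sq_le {r₀ r₁ : ℝ} (h₀ : 0 < r₀) (h₁ : r₀ ≤ r₁) :
    ∫⁻ z in norm ⁻¹' Ico r₀ r₁, ENNReal.ofReal (greenKernel ‖z‖ ^ 2) ∂hyperbolicMeasure ≤
      ENNReal.ofReal (1 / (2 * π) * Real.log (r₁ / r₀)) := by
  have hdensity (r : ℝ) (hr : r ∈ Ico r₀ r₁ ∩ Ioo 0 1) :
      ENNReal.ofReal (r / (1 - r ^ 2) ^ 2) * ENNReal.ofReal (greenKernel r ^ 2) =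
        ENNReal.ofReal (1 / (2 * π) ^ 2 * r⁻¹) := by
    have hr₀ := hr.2.1
    have hr₁ : 0 < 1 - r ^ 2 := by nlinarith [hr.2.1, hr.2.2]
    rw [← ENNReal.ofReal_mul (by positivity), greenKernel]
    congr 1
    field_simp
  have hint : IntegrableOn (fun r : ℝ => 1 / (2 * π) ^ 2 * r⁻¹) (Ioc r₀ r₁) :=
    (intervalIntegrable_iff_integrableOn_Ioc_of_le h₁).mp <| IntervalIntegrable.const_mul
      (intervalIntegral.intervalIntegrable_inv
        (fun r hr => (h₀.trans_le (uIcc_of_le h₁ ▸ hr).1).ne') continuousOn_id) _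
  calc ∫⁻ z in norm ⁻¹' Ico r₀ r₁, ENNReal.ofReal (greenKernel ‖z‖ ^ 2) ∂hyperbolicMeasure
      = ENNReal.ofReal (2 * π) * ∫⁻ r in Ico r₀ r₁ ∩ Ioo 0 1,
          ENNReal.ofReal (r / (1 - r ^ 2) ^ 2) * ENNReal.ofReal (greenKernel r ^ 2) :=
        setLIntegral_hyperbolicMeasure_radial (measurable_greenKernel.pow_const 2).ennreal_ofReal
          measurableSet_Ico
    _ ≤ ENNReal.ofReal (2 * π) * ∫⁻ r in Ioc r₀ r₁, ENNReal.ofReal (1 / (2 * π) ^ 2 * r⁻¹) := by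
        rw [setLIntegral_congr_fun (measurableSet_Ico.inter measurableSet_Ioo) hdensity,
          ← restrict_Ico_eq_restrict_Ioc]
        gcongr
        exact inter_subset_left
    _ = ENNReal.ofReal (1 / (2 * π) * Real.log (r₁ / r₀)) := by
        rw [← ofReal_integral_eq_lintegral_ofReal hint, integral_const_mul,
          ← intervalIntegral.integral_of_le h₁, integral_inv_of_pos h₀ (h₀.trans_le h₁),
          ← ENNReal.ofReal_mul (by positivity)]
        · congr 1
          field_simp
        · filter_upwards [ae_restrict_mem measurableSet_Ioc] with r hr
          have : 0 < r := h₀.trans hr.1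
          positivity

theorem farGreenKernel_sq_le {r₀ r₁ ρ : ℝ} (h₀ : 0 < r₀) (h₁ : r₀ ≤ r₁) (hρ₀ : 0 ≤ ρ)
    (hρ₁ : ρ ≤ 1) :
    farGreenKernel r₀ ρ ^ 2 ≤
      (Ico r₀ r₁).indicator (fun r => ENNReal.ofReal (greenKernel r ^ 2)) ρ +
        ENNReal.ofReal (greenKernel r₁ ^ 2) := by
  have hnonneg := greenKernel_nonneg hρ₀ hρ₁
  rcases lt_or_ge ρ r₀ with hρ | hρ
  · simp [farGreenKernel, hρ]
  · rw [farGreenKernel, indicator_of_mem (mem_Ici.mpr hρ), ← ENNReal.ofReal_pow hnonneg]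
    rcases lt_or_ge ρ r₁ with hρr₁ | hρr₁
    · rw [indicator_of_mem (mem_Ico.mpr ⟨hρ, hρr₁⟩)]
      exact le_self_add
    · have hr₁ : 0 < r₁ := h₀.trans_le h₁
      have hle := antitoneOn_greenKernel ⟨hr₁, hρr₁.trans hρ₁⟩ ⟨hr₁.trans_le hρr₁, hρ₁⟩ hρr₁
      exact le_add_left (ENNReal.ofReal_le_ofReal (by gcongr))

theorem setLIntegral_farGreenKernel_sq_le {x : ℂ} (hx : ‖x‖ < 1) (A : Set ℂ) {r₀ r₁ : ℝ}
    (h₀ : 0 < r₀) (h₁ : r₀ ≤ r₁) :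
    ∫⁻ y in A, farGreenKernel r₀ ‖eta x y‖ ^ 2 ∂hyperbolicMeasure ≤
      ENNReal.ofReal (1 / (2 * π) * Real.log (r₁ / r₀)) +
        ENNReal.ofReal (greenKernel r₁ ^ 2) * hyperbolicMeasure A := by
  set G : ℝ → ℝ≥0∞ := (Ico r₀ r₁).indicator fun r => ENNReal.ofReal (greenKernel r ^ 2)
  have hG : Measurable G :=
    (measurable_greenKernel.pow_const 2).ennreal_ofReal.indicator measurableSet_Ico
  calc ∫⁻ y in A, farGreenKernel r₀ ‖eta x y‖ ^ 2 ∂hyperbolicMeasure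
      ≤ ∫⁻ y in A, (G ‖eta x y‖ + ENNReal.ofReal (greenKernel r₁ ^ 2)) ∂hyperbolicMeasure := by
        refine lintegral_mono_ae (ae_restrict_of_ae ?_)
        filter_upwards [ae_hyperbolicMeasure_norm_lt_one] with y hy
        exact farGreenKernel_sq_le h₀ h₁ (norm_nonneg _) (norm_eta_lt_one hx hy).le
    _ = ∫⁻ y in A, G ‖eta x y‖ ∂hyperbolicMeasure +
          ENNReal.ofReal (greenKernel r₁ ^ 2) * hyperbolicMeasure A := by
        rw [lintegral_add_right _ measurable_const, setLIntegral_const]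
    _ ≤ _ := by
        gcongr
        refine (setLIntegral_le_lintegral A _).trans ?_
        rw [lintegral_comp_norm_eta hG hx]
        exact (lintegral_indicator (measurable_norm measurableSet_Ico) _).trans_le
          (lintegral_annulus_greenKernel_sq_le h₀ h₁)

theorem lintegral_mul_sq_le {Y : Type*} [MeasurableSpace Y] {β : Measure Y} {f g : Y → ℝ≥0∞}
    (hf : AEMeasurable f β) (hg : AEMeasurable g β) :
    (∫⁻ y, f y * g y ∂β) ^ 2 ≤ (∫⁻ y, f y ^ 2 ∂β) * ∫⁻ y, g y ^ 2 ∂β := by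
  have hHolder := ENNReal.lintegral_mul_le_Lp_mul_Lq β Real.HolderConjugate.two_two hf hg
  simp only [Pi.mul_apply, ENNReal.rpow_two] at hHolder
  calc _ ≤ ((∫⁻ y, f y ^ 2 ∂β) ^ (1 / 2 : ℝ) * (∫⁻ y, g y ^ 2 ∂β) ^ (1 / 2 : ℝ)) ^ 2 := by
        gcongr
    _ = _ := by
        rw [mul_pow, ← ENNReal.rpow_two, ← ENNReal.rpow_two, ← ENNReal.rpow_mul,
          ← ENNReal.rpow_mul]
        norm_num

theorem sq_mul_measure_le_of_le_lintegral {X Y : Type*} [MeasurableSpace X] [MeasurableSpace Y]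
    {α : Measure X} {β : Measure Y} [SFinite α] [SFinite β] {κ : X → Y → ℝ≥0∞}
    (hκ : Measurable (Function.uncurry κ)) {f : Y → ℝ≥0∞} (hf : Measurable f) {δ : ℝ≥0∞}
    (hδ : ∀ᵐ x ∂α, δ ≤ ∫⁻ y, κ x y * f y ∂β) :
    (δ * α univ) ^ 2 ≤ (∫⁻ y, f y ^ 2 ∂β) * ∫⁻ y, (∫⁻ x, κ x y ∂α) ^ 2 ∂β := by
  have hκ' (y : Y) : Measurable fun x => κ x y := hκ.comp measurable_prodMk_right
  have haverage : δ * α univ ≤ ∫⁻ y, f y * ∫⁻ x, κ x y ∂α ∂β := by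
    calc δ * α univ = ∫⁻ _, δ ∂α := (lintegral_const δ).symm
      _ ≤ ∫⁻ x, ∫⁻ y, κ x y * f y ∂β ∂α := lintegral_mono_ae hδ
      _ = ∫⁻ y, ∫⁻ x, κ x y * f y ∂α ∂β :=
          lintegral_lintegral_swap (hκ.mul (hf.comp measurable_snd)).aemeasurable
      _ = _ := lintegral_congr fun y => by
          rw [lintegral_mul_const _ (hκ' y), mul_comm]
  calc (δ * α univ) ^ 2 ≤ (∫⁻ y, f y * ∫⁻ x, κ x y ∂α ∂β) ^ 2 := by gcongr
    _ ≤ _ := lintegral_mul_sq_le hf.aemeasurable hκ.lintegral_prod_left.aemeasurable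

theorem lintegral_sq_lintegral_add_le {X Y : Type*} [MeasurableSpace X] [MeasurableSpace Y]
    {α : Measure X} {β : Measure Y} [SFinite α] [SFinite β] {κ₁ κ₂ : X → Y → ℝ≥0∞}
    (hκ₁ : Measurable (Function.uncurry κ₁)) (hκ₂ : Measurable (Function.uncurry κ₂))
    {a b Q : ℝ≥0∞} (ha : ∀ᵐ y ∂β, ∫⁻ x, κ₁ x y ∂α ≤ a) (ha' : ∀ᵐ x ∂α, ∫⁻ y, κ₁ x y ∂β ≤ a)
    (hb : ∀ x y, κ₂ x y ≤ b) (hQ : ∀ᵐ x ∂α, ∫⁻ y, κ₂ x y ^ 2 ∂β ≤ Q) :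
    ∫⁻ y, (∫⁻ x, (κ₁ x y + κ₂ x y) ∂α) ^ 2 ∂β ≤
      (a + 2 * (b * α univ)) * (a * α univ) + α univ * (Q * α univ) := by
  have hκ₁' (y : Y) : Measurable fun x => κ₁ x y := hκ₁.comp measurable_prodMk_right
  have hκ₂' (y : Y) : Measurable fun x => κ₂ x y := hκ₂.comp measurable_prodMk_right
  have hpointwise : ∀ᵐ y ∂β, (∫⁻ x, (κ₁ x y + κ₂ x y) ∂α) ^ 2 ≤
      (a + 2 * (b * α univ)) * ∫⁻ x, κ₁ x y ∂α + α univ * ∫⁻ x, κ₂ x y ^ 2 ∂α := by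
    filter_upwards [ha] with y hy
    have hmean : ∫⁻ x, κ₂ x y ∂α ≤ b * α univ := by
      rw [← lintegral_const]
      exact lintegral_mono fun x => hb x y
    have hmean_sq : (∫⁻ x, κ₂ x y ∂α) ^ 2 ≤ α univ * ∫⁻ x, κ₂ x y ^ 2 ∂α := by
      simpa using lintegral_mul_sq_le (f := fun _ => 1) aemeasurable_const (hκ₂' y).aemeasurable
    calc (∫⁻ x, (κ₁ x y + κ₂ x y) ∂α) ^ 2
        = (∫⁻ x, κ₁ x y ∂α + 2 * ∫⁻ x, κ₂ x y ∂α) * ∫⁻ x, κ₁ x y ∂α +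
            (∫⁻ x, κ₂ x y ∂α) ^ 2 := by
          rw [lintegral_add_left (hκ₁' y)]
          ring
      _ ≤ _ := by gcongr
  refine (lintegral_mono_ae hpointwise).trans ?_
  rw [lintegral_add_left (hκ₁.lintegral_prod_left.const_mul _),
    lintegral_const_mul _ hκ₁.lintegral_prod_left,
    lintegral_const_mul _ (hκ₂.pow_const 2).lintegral_prod_left,
    ← lintegral_lintegral_swap hκ₁.aemeasurable,
    ← lintegral_lintegral_swap (f := fun x y => κ₂ x y ^ 2) (hκ₂.pow_const 2).aemeasurable,
    ← lintegral_const (μ := α) a, ← lintegral_const (μ := α) Q]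
  exact add_le_add (mul_le_mul_right (lintegral_mono_ae ha') _)
    (mul_le_mul_right (lintegral_mono_ae hQ) _)

theorem setLIntegral_hyperbolicGradientNorm_sq_le (u : ℂ → ℝ) {A : Set ℂ} (hA : MeasurableSet A) :
    ∫⁻ y in A, hyperbolicGradientNorm u y ^ 2 ∂hyperbolicMeasure ≤ dirichletEnergy u A := by
  have hmeas := (measurable_hyperbolicGradientNorm u).pow_const 2
  rw [← lintegral_indicator hA, lintegral_hyperbolicMeasure (hmeas.indicator hA), dirichletEnergy,
    ← lintegral_indicator hA]
  refine (setLIntegral_mono' measurableSet_unitDisk fun y hy => ?_).trans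
    (setLIntegral_le_lintegral unitDisk _)
  have hy' := one_sub_sq_norm_pos hy
  by_cases hyA : y ∈ A
  · rw [indicator_of_mem hyA, indicator_of_mem hyA, hyperbolicGradientNorm, mul_pow,
      ← ENNReal.ofReal_pow hy'.le, ← mul_assoc, ← ENNReal.ofReal_mul (by positivity),
      inv_mul_cancel₀ (by positivity), ENNReal.ofReal_one, one_mul]
  · simp [hyA]

theorem sq_mul_measure_superlevel_le {u : ℂ → ℝ} (hu : ContDiff ℝ 1 u)
    (hsupp : Function.support u ⊆ unitDisk) {s₁ : ℝ} (hs₁ : 0 ≤ s₁) (s₂ : ℝ) {r₀ r₁ : ℝ}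
    (hr₀ : 0 < r₀) (hr₀' : r₀ ≤ 1 / 2) (hr₁ : r₀ ≤ r₁) {Q : ℝ≥0∞}
    (hQ : ENNReal.ofReal (1 / (2 * π) * Real.log (r₁ / r₀)) + ENNReal.ofReal (greenKernel r₁ ^ 2) *
      hyperbolicMeasure (levelBand u s₁ s₂) ≤ Q) :
    (ENNReal.ofReal (s₂ - s₁) * hyperbolicMeasure (superlevel u s₂)) ^ 2 ≤
      dirichletEnergy u (levelBand u s₁ s₂) *
        ((ENNReal.ofReal (4 / 3 * r₀) +
          2 * (ENNReal.ofReal (1 / (2 * π * r₀)) * hyperbolicMeasure (superlevel u s₂))) *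
            (ENNReal.ofReal (4 / 3 * r₀) * hyperbolicMeasure (superlevel u s₂)) +
          hyperbolicMeasure (superlevel u s₂) * (Q * hyperbolicMeasure (superlevel u s₂))) := by
  have hum := hu.continuous.measurable
  have hnear {x : ℂ} (hx : ‖x‖ < 1) (S : Set ℂ) :
      ∫⁻ y in S, nearGreenKernel r₀ ‖eta x y‖ ∂hyperbolicMeasure ≤ ENNReal.ofReal (4 / 3 * r₀) :=
    (setLIntegral_le_lintegral S _).trans <|
      (lintegral_comp_norm_eta (measurable_nearGreenKernel r₀) hx).trans_le
        (lintegral_nearGreenKernel_le hr₀')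
  have hdisk (S : Set ℂ) : ∀ᵐ x ∂hyperbolicMeasure.restrict S, ‖x‖ < 1 :=
    ae_restrict_of_ae ae_hyperbolicMeasure_norm_lt_one
  have hκ₁ : Measurable (Function.uncurry fun x y => nearGreenKernel r₀ ‖eta x y‖) :=
    (measurable_nearGreenKernel r₀).comp measurable_eta_uncurry.norm
  have hκ₂ : Measurable (Function.uncurry fun x y => farGreenKernel r₀ ‖eta x y‖) :=
    (measurable_farGreenKernel r₀).comp measurable_eta_uncurry.norm
  have hrepresentation : ∀ᵐ x ∂hyperbolicMeasure.restrict (superlevel u s₂),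
      ENNReal.ofReal (s₂ - s₁) ≤ ∫⁻ y in levelBand u s₁ s₂, (nearGreenKernel r₀ ‖eta x y‖ +
        farGreenKernel r₀ ‖eta x y‖) * hyperbolicGradientNorm u y ∂hyperbolicMeasure := by
    filter_upwards [hdisk _, ae_restrict_mem (measurableSet_superlevel hum s₂)] with x hx hxs
    simp only [nearGreenKernel_add_farGreenKernel]
    exact ofReal_sub_le_lintegral_greenKernel hu hsupp hx hs₁ hxs
  have hduality := sq_mul_measure_le_of_le_lintegral (hκ₁.add hκ₂)
    (measurable_hyperbolicGradientNorm u) hrepresentation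
  have hkernel := lintegral_sq_lintegral_add_le (α := hyperbolicMeasure.restrict (superlevel u s₂))
    (β := hyperbolicMeasure.restrict (levelBand u s₁ s₂)) hκ₁ hκ₂ (Q := Q)
    ((hdisk _).mono fun y hy => by simpa only [norm_eta_comm _ y] using hnear hy (superlevel u s₂))
    ((hdisk _).mono fun x hx => hnear hx _) (fun x y => farGreenKernel_le hr₀ _)
    ((hdisk _).mono fun x hx => (setLIntegral_farGreenKernel_sq_le hx _ hr₀ hr₁).trans hQ)
  rw [Measure.restrict_apply_univ] at hduality hkernel
  exact hduality.trans (mul_le_mul'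
    (setLIntegral_hyperbolicGradientNorm_sq_le u (measurableSet_levelBand hum s₁ s₂)) hkernel)

theorem nearGreenKernel_mass_le {V : ℝ} (hV : 0 < V) :
    (4 / 3 * (√V / 2) + 2 * (1 / (2 * π * (√V / 2)) * V)) * (4 / 3 * (√V / 2) * V) ≤ V ^ 2 := by
  have hsq := Real.sq_sqrt hV.le
  have hsqrt := Real.sqrt_pos.mpr hV
  generalize √V = w at hsq hsqrt ⊢
  subst hsq
  have hπ : 4 / 3 / π ≤ 4 / 9 := by
    rw [div_le_div_iff₀ pi_pos (by norm_num)]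
    linarith [Real.pi_gt_three]
  calc (4 / 3 * (w / 2) + 2 * (1 / (2 * π * (w / 2)) * w ^ 2)) * (4 / 3 * (w / 2) * w ^ 2)
      = (4 / 9 + 4 / 3 / π) * (w ^ 2) ^ 2 := by
        field_simp
        ring
    _ ≤ (w ^ 2) ^ 2 := mul_le_of_le_one_left (by positivity) (by linarith)

theorem sq_sub_le_mul_log_sub_log {s₁ s₂ V W D : ℝ} (hs : s₁ ≤ s₂) (hV : 0 < V) (hVW : V ≤ W)
    (hD : 0 ≤ D)
    (h : (ENNReal.ofReal (s₂ - s₁) * ENNReal.ofReal V) ^ 2 ≤ ENNReal.ofReal D *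
      ((ENNReal.ofReal (4 / 3 * (√V / 2)) +
          2 * (ENNReal.ofReal (1 / (2 * π * (√V / 2))) * ENNReal.ofReal V)) *
            (ENNReal.ofReal (4 / 3 * (√V / 2)) * ENNReal.ofReal V) +
        ENNReal.ofReal V * (ENNReal.ofReal
          (1 / (2 * π) * Real.log (√W / 2 / (√V / 2)) + 1) * ENNReal.ofReal V))) :
    4 * π * (s₂ - s₁) ^ 2 ≤ D * (Real.log W - Real.log V + 8 * π) := by
  have hW : 0 < W := hV.trans_le hVW
  have hlog : Real.log (√W / 2 / (√V / 2)) = (Real.log W - Real.log V) / 2 := by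
    rw [div_div_div_cancel_right₀ two_ne_zero, ← Real.sqrt_div hW.le,
      Real.log_sqrt (by positivity), Real.log_div hW.ne' hV.ne']
  have hL : 0 ≤ Real.log W - Real.log V := sub_nonneg.mpr (Real.log_le_log hV hVW)
  rw [hlog, ← ENNReal.ofReal_mul (sub_nonneg.mpr hs), ← ENNReal.ofReal_pow
      (mul_nonneg (sub_nonneg.mpr hs) hV.le), ← ENNReal.ofReal_mul (by positivity),
    ← ENNReal.ofReal_mul (by positivity), ← ENNReal.ofReal_mul (by positivity),
    ← ENNReal.ofReal_mul hV.le, ← ENNReal.ofReal_ofNat 2, ← ENNReal.ofReal_mul zero_le_two,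
    ← ENNReal.ofReal_add (by positivity) (by positivity), ← ENNReal.ofReal_mul (by positivity),
    ← ENNReal.ofReal_add (by positivity) (by positivity), ← ENNReal.ofReal_mul hD,
    ENNReal.ofReal_le_ofReal_iff (by positivity)] at h
  refine le_of_mul_le_mul_right ?_ (by positivity : 0 < V ^ 2)
  calc 4 * π * (s₂ - s₁) ^ 2 * V ^ 2 = 4 * π * ((s₂ - s₁) * V) ^ 2 := by ring
    _ ≤ 4 * π * (D * (V ^ 2 + V * ((1 / (2 * π) * ((Real.log W - Real.log V) / 2) + 1) * V))) := by
        gcongr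
        exact h.trans (by gcongr; exact nearGreenKernel_mass_le hV)
    _ = _ := by
        field_simp
        ring

theorem sq_sub_le_dirichletEnergy_mul_log {u : ℂ → ℝ} (hu : ContDiff ℝ 1 u)
    (hsupp : Function.support u ⊆ unitDisk) {s₁ s₂ W D : ℝ} (hs₁ : 0 ≤ s₁) (hs : s₁ ≤ s₂)
    (hV : 0 < hyperbolicMeasure.real (superlevel u s₂))
    (hV₁ : hyperbolicMeasure.real (superlevel u s₂) ≤ 1)
    (hVW : hyperbolicMeasure.real (superlevel u s₂) ≤ W)
    (hW : ENNReal.ofReal (greenKernel (√W / 2) ^ 2) *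
      hyperbolicMeasure (levelBand u s₁ s₂) ≤ 1)
    (hD : 0 ≤ D) (henergy : dirichletEnergy u (levelBand u s₁ s₂) ≤ ENNReal.ofReal D) :
    4 * π * (s₂ - s₁) ^ 2 ≤
      D * (Real.log W - Real.log (hyperbolicMeasure.real (superlevel u s₂)) + 8 * π) := by
  have hmeasure : hyperbolicMeasure (superlevel u s₂) =
      ENNReal.ofReal (hyperbolicMeasure.real (superlevel u s₂)) :=
    (ofReal_measureReal (ENNReal.toReal_pos_iff.mp hV).2.ne).symm
  set V := hyperbolicMeasure.real (superlevel u s₂)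
  have hr₀ : 0 < √V / 2 := half_pos (Real.sqrt_pos.mpr hV)
  have hr₀' : √V / 2 ≤ 1 / 2 := by gcongr; exact Real.sqrt_le_one.mpr hV₁
  have hr₁ : √V / 2 ≤ √W / 2 := by gcongr
  have hlog : 0 ≤ 1 / (2 * π) * Real.log (√W / 2 / (√V / 2)) :=
    mul_nonneg (by positivity) (Real.log_nonneg ((one_le_div hr₀).mpr hr₁))
  have h := sq_mul_measure_superlevel_le hu hsupp hs₁ s₂ hr₀ hr₀' hr₁
    (Q := ENNReal.ofReal (1 / (2 * π) * Real.log (√W / 2 / (√V / 2)) + 1)) (by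
      rw [ENNReal.ofReal_add hlog zero_le_one, ENNReal.ofReal_one]
      gcongr)
  rw [hmeasure] at h
  exact sq_sub_le_mul_log_sub_log hs hV hVW hD (h.trans (by gcongr))

theorem sq_le_dirichletEnergy_mul_log {u : ℂ → ℝ} (hu : ContDiff ℝ 1 u)
    (hsupp : Function.support u ⊆ unitDisk) {s D : ℝ} (hs : 0 ≤ s)
    (hV : 0 < hyperbolicMeasure.real (superlevel u s))
    (hV₁ : hyperbolicMeasure.real (superlevel u s) ≤ 1) (hD : 0 ≤ D)
    (henergy : dirichletEnergy u (levelBand u 0 s) ≤ ENNReal.ofReal D) :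
    4 * π * s ^ 2 ≤ D * (-Real.log (hyperbolicMeasure.real (superlevel u s)) + 27) := by
  have hsqrt : √4 / 2 = 1 := by rw [show (4 : ℝ) = 2 ^ 2 by norm_num]; simp
  have hlog : Real.log 4 + 8 * π ≤ 27 := by
    rw [show (4 : ℝ) = 2 ^ 2 by norm_num, Real.log_pow]
    push_cast
    linarith [Real.log_two_lt_d9, Real.pi_lt_d2]
  have h := sq_sub_le_dirichletEnergy_mul_log hu hsupp le_rfl hs hV hV₁ (W := 4) (by linarith)
    (by simp [hsqrt, greenKernel]) hD henergy
  rw [sub_zero] at h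
  refine h.trans (mul_le_mul_of_nonneg_left ?_ hD)
  linarith

theorem sq_sub_le_dirichletEnergy_mul_log_sub_log {u : ℂ → ℝ} (hu : ContDiff ℝ 1 u)
    (hsupp : Function.support u ⊆ unitDisk) {s₁ s₂ D : ℝ} (hs₁ : 0 ≤ s₁) (hs : s₁ ≤ s₂)
    (hV₂ : 0 < hyperbolicMeasure.real (superlevel u s₂))
    (hV₁ : hyperbolicMeasure (superlevel u s₁) ≤ 1) (hD : 0 ≤ D)
    (henergy : dirichletEnergy u (levelBand u s₁ s₂) ≤ ENNReal.ofReal D) :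
    4 * π * (s₂ - s₁) ^ 2 ≤ D * (Real.log (hyperbolicMeasure.real (superlevel u s₁)) -
      Real.log (hyperbolicMeasure.real (superlevel u s₂)) + 27) := by
  have hfinite : hyperbolicMeasure (superlevel u s₁) ≠ ⊤ := ne_top_of_le_ne_top (by simp) hV₁
  have hV₁' : hyperbolicMeasure.real (superlevel u s₁) ≤ 1 := ENNReal.toReal_le_of_le_ofReal
    zero_le_one (by simpa using hV₁)
  have hanti := measureReal_mono (μ := hyperbolicMeasure) (superlevel_anti u hs) hfinite
  have hband : hyperbolicMeasure (levelBand u s₁ s₂) ≤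
      ENNReal.ofReal (hyperbolicMeasure.real (superlevel u s₁)) :=
    (measure_mono (levelBand_subset_superlevel u s₁ s₂)).trans_eq (ofReal_measureReal hfinite).symm
  set V₁ := hyperbolicMeasure.real (superlevel u s₁)
  have hV₁₀ : 0 < V₁ := hV₂.trans_le hanti
  have hkernel : greenKernel (√V₁ / 2) ^ 2 * V₁ ≤ 1 := by
    have hle : greenKernel (√V₁ / 2) ≤ 1 / (2 * π * (√V₁ / 2)) := greenKernel_le (by positivity)
    have hnonneg : 0 ≤ greenKernel (√V₁ / 2) :=
      greenKernel_nonneg (by positivity) (by linarith [Real.sqrt_le_one.mpr hV₁'])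
    calc greenKernel (√V₁ / 2) ^ 2 * V₁ ≤ (1 / (2 * π * (√V₁ / 2))) ^ 2 * √V₁ ^ 2 := by
          rw [Real.sq_sqrt hV₁₀.le]
          gcongr
      _ = 1 / π ^ 2 := by field_simp
      _ ≤ 1 := (div_le_one (by positivity)).mpr (one_le_pow₀ (by linarith [Real.pi_gt_three]))
  refine (sq_sub_le_dirichletEnergy_mul_log hu hsupp hs₁ hs hV₂ (hanti.trans hV₁') hanti
    ?_ hD henergy).trans (mul_le_mul_of_nonneg_left (by linarith [Real.pi_lt_d2]) hD)
  refine (mul_le_mul_right hband _).trans ?_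
  rw [← ENNReal.ofReal_mul (sq_nonneg _)]
  exact ENNReal.ofReal_le_one.mpr hkernel

/-! ### Decay of the weighted area of the superlevel sets -/

/-- The hyperbolic area of `{|u| ≥ s}`, times the value `exp (4πs²)` of the Trudinger–Moser
integrand at the level `s`. -/
def weightedArea (u : ℂ → ℝ) (s : ℝ) : ℝ :=
  Real.exp (4 * π * s ^ 2) * hyperbolicMeasure.real (superlevel u s)

theorem weightedArea_nonneg (u : ℂ → ℝ) (s : ℝ) : 0 ≤ weightedArea u s :=
  mul_nonneg (Real.exp_pos _).le measureReal_nonneg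

theorem measureReal_superlevel_pos {u : ℂ → ℝ} {s : ℝ} (h : 0 < weightedArea u s) :
    0 < hyperbolicMeasure.real (superlevel u s) :=
  pos_of_mul_pos_right h (Real.exp_pos _).le

theorem neg_log_measureReal_superlevel_le {u : ℂ → ℝ} {s l : ℝ}
    (h : Real.exp (-l) ≤ weightedArea u s) :
    -Real.log (hyperbolicMeasure.real (superlevel u s)) ≤ 4 * π * s ^ 2 + l := by
  have hpos := (Real.exp_pos _).trans_le h
  have hlog := (Real.le_log_iff_exp_le hpos).mpr h
  rw [weightedArea, Real.log_mul (Real.exp_pos _).ne' (measureReal_superlevel_pos hpos).ne',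
    Real.log_exp] at hlog
  linarith

theorem dirichletEnergy_levelBand_add_le {u : ℂ → ℝ} (hu : Measurable u) (s₀ s₁ s₂ : ℝ) :
    dirichletEnergy u (levelBand u s₀ s₁) + dirichletEnergy u (levelBand u s₁ s₂) ≤
      dirichletEnergy u univ := by
  have hdisjoint : Disjoint (levelBand u s₀ s₁) (levelBand u s₁ s₂) :=
    Set.disjoint_left.mpr fun y hy hy' => hy.2.not_gt hy'.1
  rw [dirichletEnergy, dirichletEnergy,
    ← lintegral_union (measurableSet_levelBand hu _ _) hdisjoint]
  exact lintegral_mono_set (subset_univ _)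

theorem exists_ofReal_split_of_add_le_one {a b : ℝ≥0∞} (h : a + b ≤ 1) :
    ∃ D : ℝ, 0 ≤ D ∧ D ≤ 1 ∧ a ≤ ENNReal.ofReal D ∧ b ≤ ENNReal.ofReal (1 - D) := by
  have ha : a ≤ 1 := le_self_add.trans h
  have hfinite : a ≠ ⊤ := ne_top_of_le_ne_top ENNReal.one_ne_top ha
  refine ⟨a.toReal, ENNReal.toReal_nonneg, ?_, (ENNReal.ofReal_toReal hfinite).ge, ?_⟩
  · simpa using ENNReal.toReal_mono ENNReal.one_ne_top ha
  · rw [ENNReal.ofReal_sub _ ENNReal.toReal_nonneg, ENNReal.ofReal_toReal hfinite,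
      ENNReal.ofReal_one]
    exact ENNReal.le_sub_of_add_le_left hfinite h

theorem sq_sub_sq_le_of_energy_split {σ₁ σ₂ D w₁ w₂ C l : ℝ} (hC : 0 ≤ C) (hσ₁ : 1 ≤ σ₁)
    (hσ : σ₁ ≤ σ₂) (hD₀ : 0 ≤ D) (hD₁ : D ≤ 1) (hbase : σ₁ ^ 2 ≤ D * (w₁ + C))
    (hincrement : (σ₂ - σ₁) ^ 2 ≤ (1 - D) * (w₂ - w₁ + C))
    (hw₁ : w₁ ≤ σ₁ ^ 2 + l) (hw₂ : w₂ ≤ σ₂ ^ 2 + l) :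
    0 ≤ l + 2 * C ∧ σ₂ ^ 2 - σ₁ ^ 2 ≤ 6 * (l + 2 * C) + 9 * (l + 2 * C) ^ 2 := by
  obtain ⟨d, rfl⟩ : ∃ d, σ₂ = σ₁ + d := ⟨σ₂ - σ₁, by ring⟩
  rw [add_sub_cancel_left] at hincrement
  have hd : 0 ≤ d := by linarith
  have hpos : 0 < w₁ + C := by
    by_contra! h
    nlinarith [mul_nonneg hD₀ (neg_nonneg.2 h)]
  have hl : 0 ≤ l + C := by linarith [hbase.trans (mul_le_of_le_one_left hpos.le hD₁)]
  set L := l + 2 * C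
  have hL₀ : 0 ≤ L := by linarith
  -- The first band needs almost all of the energy, so only a fraction `(l + C) / σ₁²` is left.
  have hremaining : (1 - D) * (σ₁ ^ 2 + l + C) ≤ l + C := by
    nlinarith [mul_le_mul_of_nonneg_left (by linarith : w₁ + C ≤ σ₁ ^ 2 + l + C) hD₀]
  have hstep : d ^ 2 ≤ (1 - D) * (d ^ 2 + 2 * d * σ₁ + L) :=
    hincrement.trans (mul_le_mul_of_nonneg_left (by nlinarith) (sub_nonneg.2 hD₁))
  have hproduct : d ^ 2 * (σ₁ ^ 2 + l + C) ≤ (l + C) * (d ^ 2 + 2 * d * σ₁ + L) :=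
    calc d ^ 2 * (σ₁ ^ 2 + l + C)
        ≤ (1 - D) * (d ^ 2 + 2 * d * σ₁ + L) * (σ₁ ^ 2 + l + C) :=
          mul_le_mul_of_nonneg_right hstep (by nlinarith)
      _ = (1 - D) * (σ₁ ^ 2 + l + C) * (d ^ 2 + 2 * d * σ₁ + L) := by ring
      _ ≤ _ := mul_le_mul_of_nonneg_right hremaining (by positivity)
  have hquadratic : (d * σ₁) ^ 2 ≤ 2 * L * (d * σ₁) + L ^ 2 := by
    nlinarith [mul_le_mul_of_nonneg_right (by linarith : l + C ≤ L)
      (by positivity : 0 ≤ 2 * (d * σ₁) + L)]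
  have hdσ : d * σ₁ ≤ 3 * L := by
    by_contra! h
    nlinarith
  have hd' : d ≤ 3 * L := (le_mul_of_one_le_right hd hσ₁).trans hdσ
  exact ⟨hL₀, by nlinarith⟩

theorem one_add_sq_le_exp {g L : ℝ} (hL : 0 ≤ L) (hg₀ : 0 ≤ g) (hg : g ≤ 6 * L + 9 * L ^ 2) :
    (1 + g) ^ 2 ≤ 12 ^ 4 * Real.exp L := by
  have hlinear : 1 + 3 * L ≤ 12 * Real.exp (L / 4) := by
    linarith [Real.add_one_le_exp (L / 4)]
  calc (1 + g) ^ 2 ≤ ((1 + 3 * L) ^ 2) ^ 2 := by gcongr; linarith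
    _ = (1 + 3 * L) ^ 4 := by ring
    _ ≤ (12 * Real.exp (L / 4)) ^ 4 := by gcongr
    _ = 12 ^ 4 * Real.exp L := by
      rw [mul_pow, ← Real.exp_nat_mul]
      congr 2
      push_cast
      ring

theorem level_gap_le {u : ℂ → ℝ} (hu : ContDiff ℝ 1 u) (hsupp : Function.support u ⊆ unitDisk)
    (henergy : dirichletEnergy u univ ≤ 1) {s₁ s₂ l : ℝ} (hs₁ : 0 ≤ s₁) (hs : s₁ ≤ s₂)
    (hlevel : 1 ≤ 4 * π * s₁ ^ 2) (harea : hyperbolicMeasure (superlevel u s₁) ≤ 1)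
    (hw₁ : Real.exp (-l) ≤ weightedArea u s₁) (hw₂ : Real.exp (-l) ≤ weightedArea u s₂) :
    0 ≤ l + 2 * 27 ∧
      4 * π * s₂ ^ 2 - 4 * π * s₁ ^ 2 ≤ 6 * (l + 2 * 27) + 9 * (l + 2 * 27) ^ 2 := by
  obtain ⟨D, hD₀, hD₁, hD, hD'⟩ := exists_ofReal_split_of_add_le_one
    ((dirichletEnergy_levelBand_add_le hu.continuous.measurable 0 s₁ s₂).trans henergy)
  have hV₁ := measureReal_superlevel_pos ((Real.exp_pos _).trans_le hw₁)
  have hV₂ := measureReal_superlevel_pos ((Real.exp_pos _).trans_le hw₂)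
  have harea' : hyperbolicMeasure.real (superlevel u s₁) ≤ 1 :=
    ENNReal.toReal_le_of_le_ofReal zero_le_one (by simpa using harea)
  have hbase := sq_le_dirichletEnergy_mul_log hu hsupp hs₁ hV₁ harea' hD₀ hD
  have hincrement := sq_sub_le_dirichletEnergy_mul_log_sub_log hu hsupp hs₁ hs hV₂ harea
    (sub_nonneg.mpr hD₁) hD'
  have hscale (x : ℝ) : (√(4 * π) * x) ^ 2 = 4 * π * x ^ 2 := by
    rw [mul_pow, Real.sq_sqrt (by positivity)]
  have hgap := sq_sub_sq_le_of_energy_split (σ₁ := √(4 * π) * s₁) (σ₂ := √(4 * π) * s₂)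
    (w₁ := -Real.log (hyperbolicMeasure.real (superlevel u s₁)))
    (w₂ := -Real.log (hyperbolicMeasure.real (superlevel u s₂)))
    (C := 27) (l := l) (by norm_num)
    ((one_le_sq_iff₀ (by positivity)).mp (hlevel.trans_eq (hscale s₁).symm)) (by gcongr) hD₀ hD₁
    ((hscale s₁).trans_le hbase) (by rwa [← mul_sub, hscale, neg_sub_neg])
    (by rw [hscale]; exact neg_log_measureReal_superlevel_le hw₁)
    (by rw [hscale]; exact neg_log_measureReal_superlevel_le hw₂)
  simpa only [hscale] using hgap

theorem weightedArea_mul_sq_le {u : ℂ → ℝ} (hu : ContDiff ℝ 1 u)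
    (hsupp : Function.support u ⊆ unitDisk) (henergy : dirichletEnergy u univ ≤ 1) {s t : ℝ}
    (hs : 0 ≤ s) (hs' : 1 ≤ 4 * π * s ^ 2) (hs_area : hyperbolicMeasure (superlevel u s) ≤ 1)
    (ht : 0 ≤ t) (ht' : 1 ≤ 4 * π * t ^ 2) (ht_area : hyperbolicMeasure (superlevel u t) ≤ 1)
    (hst : weightedArea u s ≤ weightedArea u t) :
    weightedArea u s * (1 + |4 * π * s ^ 2 - 4 * π * t ^ 2|) ^ 2 ≤
      12 ^ 4 * Real.exp (2 * 27) := by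
  rcases (weightedArea_nonneg u s).eq_or_lt with hzero | hpos
  · rw [← hzero, zero_mul]
    positivity
  set l := -Real.log (weightedArea u s) with hl
  have hws : Real.exp (-l) = weightedArea u s := by rw [hl, neg_neg, Real.exp_log hpos]
  have hgap : 0 ≤ l + 2 * 27 ∧ |4 * π * s ^ 2 - 4 * π * t ^ 2| ≤
      6 * (l + 2 * 27) + 9 * (l + 2 * 27) ^ 2 := by
    rcases le_total s t with h | h
    · rw [abs_sub_comm, abs_of_nonneg (sub_nonneg.mpr (by gcongr))]
      exact level_gap_le hu hsupp henergy hs h hs' hs_area hws.le (hws.trans_le hst)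
    · rw [abs_of_nonneg (sub_nonneg.mpr (by gcongr))]
      exact level_gap_le hu hsupp henergy ht h ht' ht_area (hws.trans_le hst) hws.le
  calc weightedArea u s * (1 + |4 * π * s ^ 2 - 4 * π * t ^ 2|) ^ 2
      ≤ weightedArea u s * (12 ^ 4 * Real.exp (l + 2 * 27)) := by
        gcongr
        exact one_add_sq_le_exp hgap.1 (abs_nonneg _) hgap.2
    _ = 12 ^ 4 * Real.exp (2 * 27) := by
        rw [Real.exp_add, ← hws, Real.exp_neg]
        field_simp

/-! ### The Hardy inequality on the disk -/

theorem integrable_clm_mul_fderiv_apply {E : Type*} [NormedAddCommGroup E] [NormedSpace ℝ E]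
    [MeasurableSpace E] [BorelSpace E] {μ : Measure E} [IsFiniteMeasureOnCompacts μ] {W : E → ℝ}
    (hW : ContDiff ℝ 1 W) (hc : HasCompactSupport W) (l : E →L[ℝ] ℝ) (v : E) :
    Integrable (fun z => l z * fderiv ℝ W z v) μ :=
  (l.continuous.mul ((hW.continuous_fderiv one_ne_zero).clm_apply
    continuous_const)).integrable_of_hasCompactSupport (hc.fderiv_apply ℝ v).mul_left

theorem integral_clm_mul_fderiv_apply {E : Type*} [NormedAddCommGroup E] [NormedSpace ℝ E]
    [FiniteDimensional ℝ E] [MeasurableSpace E] [BorelSpace E] {μ : Measure E} [μ.IsAddHaarMeasure]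
    {W : E → ℝ} (hW : ContDiff ℝ 1 W) (hc : HasCompactSupport W) (l : E →L[ℝ] ℝ) (v : E) :
    ∫ z, l z * fderiv ℝ W z v ∂μ = -(l v * ∫ z, W z ∂μ) := by
  rw [integral_mul_fderiv_eq_neg_fderiv_mul_of_integrable (f := fun z => l z)
    ?_ (integrable_clm_mul_fderiv_apply hW hc l v)
    ((l.continuous.mul hW.continuous).integrable_of_hasCompactSupport hc.mul_left)
    (fun z _ => l.differentiableAt) (fun z _ => hW.differentiable one_ne_zero z)]
  · simp [integral_const_mul]
  · simpa using (hW.continuous.integrable_of_hasCompactSupport hc).const_mul (l v)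

theorem fderiv_apply_self_eq_sum {E : Type*} [NormedAddCommGroup E] [NormedSpace ℝ E]
    [FiniteDimensional ℝ E] {ι : Type*} [Fintype ι] (b : Module.Basis ι ℝ E) (W : E → ℝ) (z : E) :
    fderiv ℝ W z z = ∑ i, (b.coord i).toContinuousLinearMap z * fderiv ℝ W z (b i) := by
  calc fderiv ℝ W z z = fderiv ℝ W z (∑ i, b.repr z i • b i) := by rw [b.sum_repr]
    _ = _ := by simp only [map_sum, map_smul, smul_eq_mul]; rfl

theorem integrable_fderiv_apply_self {E : Type*} [NormedAddCommGroup E] [NormedSpace ℝ E]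
    [FiniteDimensional ℝ E] [MeasurableSpace E] [BorelSpace E] {μ : Measure E}
    [IsFiniteMeasureOnCompacts μ] {W : E → ℝ} (hW : ContDiff ℝ 1 W) (hc : HasCompactSupport W) :
    Integrable (fun z => fderiv ℝ W z z) μ := by
  simp only [fderiv_apply_self_eq_sum (Module.finBasis ℝ E) W]
  exact integrable_finsetSum _ fun i _ => integrable_clm_mul_fderiv_apply hW hc _ _

theorem integral_fderiv_apply_self {E : Type*} [NormedAddCommGroup E] [NormedSpace ℝ E]
    [FiniteDimensional ℝ E] [MeasurableSpace E] [BorelSpace E] {μ : Measure E} [μ.IsAddHaarMeasure]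
    {W : E → ℝ} (hW : ContDiff ℝ 1 W) (hc : HasCompactSupport W) :
    ∫ z, fderiv ℝ W z z ∂μ = -(Module.finrank ℝ E * ∫ z, W z ∂μ) := by
  simp only [fderiv_apply_self_eq_sum (Module.finBasis ℝ E) W]
  rw [integral_finsetSum _ fun i _ => integrable_clm_mul_fderiv_apply hW hc _ _]
  simp only [integral_clm_mul_fderiv_apply hW hc]
  simp

theorem contDiff_mul_of_tsupport_subset {E : Type*} [NormedAddCommGroup E] [NormedSpace ℝ E]
    {n : WithTop ℕ∞} {f g : E → ℝ} (hf : ContDiff ℝ n f)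
    (hg : ∀ z ∈ tsupport f, ContDiffAt ℝ n g z) : ContDiff ℝ n fun z => f z * g z :=
  contDiff_iff_contDiffAt.2 fun z => by
    by_cases hz : z ∈ tsupport f
    · exact hf.contDiffAt.mul (hg z hz)
    · refine (contDiffAt_const (c := (0 : ℝ))).congr_of_eventuallyEq ?_
      filter_upwards [notMem_tsupport_iff_eventuallyEq.1 hz] with w hw
      simp [hw]

theorem hasCompactSupport_of_tsupport_subset_unitDisk {u : ℂ → ℝ} (hs : tsupport u ⊆ unitDisk) :
    HasCompactSupport u :=
  (isCompact_closedBall (0 : ℂ) 1).of_isClosed_subset (isClosed_tsupport u) fun _ hz =>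
    mem_closedBall_zero_iff.2 (hs hz).le

theorem fderiv_sq_mul_inv_one_sub_sq_norm_apply_self {u : ℂ → ℝ} {z : ℂ}
    (hu : DifferentiableAt ℝ u z) (hz : ‖z‖ < 1) :
    fderiv ℝ (fun z => u z ^ 2 * (1 - ‖z‖ ^ 2)⁻¹) z z =
      2 * (u z * (1 - ‖z‖ ^ 2)⁻¹) * fderiv ℝ u z z +
        2 * (u z * (1 - ‖z‖ ^ 2)⁻¹) ^ 2 * ‖z‖ ^ 2 := by
  have hnorm : HasFDerivAt (fun z : ℂ => 1 - ‖z‖ ^ 2) (-(2 • innerSL ℝ z)) z :=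
    (hasStrictFDerivAt_norm_sq z).hasFDerivAt.const_sub 1
  have hinv := (hasDerivAt_inv (one_sub_sq_norm_pos hz).ne').comp_hasFDerivAt z hnorm
  have hW : fderiv ℝ (fun z => u z ^ 2 * (1 - ‖z‖ ^ 2)⁻¹) z = _ :=
    ((hu.hasFDerivAt.pow 2).mul hinv).fderiv
  rw [hW]
  simp only [← inv_pow, smul_neg, neg_smul, neg_neg, Function.comp_apply, Nat.add_one_sub_one,
    pow_one, nsmul_eq_mul, Nat.cast_ofNat, add_apply, smul_apply, coe_innerSL_apply,
    inner_self_eq_norm_sq_to_K, ringHom_apply, smul_eq_mul]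
  ring

theorem sq_mul_sub_sq_norm_fderiv_le_of_norm_lt_one {u : ℂ → ℝ} {z : ℂ}
    (hu : DifferentiableAt ℝ u z) (hz : ‖z‖ < 1) :
    u z ^ 2 * ((1 - ‖z‖ ^ 2) ^ 2)⁻¹ - ‖fderiv ℝ u z‖ ^ 2 ≤
      2 * (u z ^ 2 * (1 - ‖z‖ ^ 2)⁻¹) + fderiv ℝ (fun z => u z ^ 2 * (1 - ‖z‖ ^ 2)⁻¹) z z := by
  have hradial : |fderiv ℝ u z z| ≤ ‖fderiv ℝ u z‖ :=
    ((fderiv ℝ u z).le_opNorm z).trans (mul_le_of_le_one_right (norm_nonneg _) hz.le)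
  have hradial_sq : fderiv ℝ u z z ^ 2 ≤ ‖fderiv ℝ u z‖ ^ 2 :=
    sq_le_sq' (abs_le.mp hradial).1 (abs_le.mp hradial).2
  have hcancel : (1 - ‖z‖ ^ 2) * (1 - ‖z‖ ^ 2)⁻¹ = 1 :=
    mul_inv_cancel₀ (one_sub_sq_norm_pos hz).ne'
  have hsplit : 2 * (u z ^ 2 * (1 - ‖z‖ ^ 2)⁻¹) =
      2 * (u z * (1 - ‖z‖ ^ 2)⁻¹) ^ 2 * (1 - ‖z‖ ^ 2) := by
    linear_combination -(2 * (u z) ^ 2 * (1 - ‖z‖ ^ 2)⁻¹) * hcancel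
  rw [fderiv_sq_mul_inv_one_sub_sq_norm_apply_self hu hz, hsplit, ← inv_pow]
  -- The difference of the two sides is at least the square `(u / (1 - |z|²) + Du(z) z)²`.
  nlinarith [sq_nonneg (u z * (1 - ‖z‖ ^ 2)⁻¹ + fderiv ℝ u z z)]

theorem integrable_sq_norm_fderiv {E : Type*} [NormedAddCommGroup E] [NormedSpace ℝ E]
    [MeasurableSpace E] [BorelSpace E] {μ : Measure E} [IsFiniteMeasureOnCompacts μ] {u : E → ℝ}
    (hu : ContDiff ℝ 1 u) (hc : HasCompactSupport u) :
    Integrable (fun z => ‖fderiv ℝ u z‖ ^ 2) μ := by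
  have hcont := (hu.continuous_fderiv one_ne_zero).norm
  simp only [sq]
  exact (hcont.mul hcont).integrable_of_hasCompactSupport (hc.fderiv ℝ).norm.mul_right

theorem contDiff_sq_mul_of_tsupport_subset_unitDisk {u ψ : ℂ → ℝ} (hu : ContDiff ℝ 1 u)
    (hs : tsupport u ⊆ unitDisk) (hψ : ∀ z ∈ unitDisk, ContDiffAt ℝ 1 ψ z) :
    ContDiff ℝ 1 fun z => u z ^ 2 * ψ z := by
  simp only [sq, mul_assoc]
  exact contDiff_mul_of_tsupport_subset hu fun z hz => hu.contDiffAt.mul (hψ z (hs hz))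

theorem hasCompactSupport_sq_mul {α : Type*} [TopologicalSpace α] {u : α → ℝ}
    (hc : HasCompactSupport u) (ψ : α → ℝ) : HasCompactSupport fun z => u z ^ 2 * ψ z := by
  simp only [sq, mul_assoc]
  exact hc.mul_right

theorem sq_mul_sub_sq_norm_fderiv_le {u : ℂ → ℝ} (hu : Differentiable ℝ u)
    (hs : tsupport u ⊆ unitDisk) (z : ℂ) :
    u z ^ 2 * ((1 - ‖z‖ ^ 2) ^ 2)⁻¹ - ‖fderiv ℝ u z‖ ^ 2 ≤
      2 * (u z ^ 2 * (1 - ‖z‖ ^ 2)⁻¹) + fderiv ℝ (fun z => u z ^ 2 * (1 - ‖z‖ ^ 2)⁻¹) z z := by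
  by_cases hz : z ∈ tsupport u
  · exact sq_mul_sub_sq_norm_fderiv_le_of_norm_lt_one (hu z) (hs hz)
  · have hfderiv : fderiv ℝ (fun z => u z ^ 2 * (1 - ‖z‖ ^ 2)⁻¹) z = 0 :=
      HasFDerivAt.fderiv <| (hasFDerivAt_const (0 : ℝ) z).congr_of_eventuallyEq <| by
        filter_upwards [notMem_tsupport_iff_eventuallyEq.1 hz] with w hw
        simp [hw]
    simp [hfderiv, image_eq_zero_of_notMem_tsupport hz]

theorem integrable_sq_mul_inv_sq_one_sub_sq_norm {u : ℂ → ℝ} (hu : ContDiff ℝ 1 u)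
    (hs : tsupport u ⊆ unitDisk) : Integrable fun z => u z ^ 2 * ((1 - ‖z‖ ^ 2) ^ 2)⁻¹ :=
  (contDiff_sq_mul_of_tsupport_subset_unitDisk hu hs fun _ hz =>
    ((contDiffAt_const.sub (contDiff_norm_sq ℝ).contDiffAt).pow 2).inv
      (pow_pos (one_sub_sq_norm_pos hz) 2).ne').continuous.integrable_of_hasCompactSupport
        (hasCompactSupport_sq_mul (hasCompactSupport_of_tsupport_subset_unitDisk hs) _)

theorem integral_sq_mul_le_integral_sq_norm_fderiv {u : ℂ → ℝ} (hu : ContDiff ℝ 1 u)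
    (hs : tsupport u ⊆ unitDisk) :
    ∫ z, u z ^ 2 * ((1 - ‖z‖ ^ 2) ^ 2)⁻¹ ≤ ∫ z, ‖fderiv ℝ u z‖ ^ 2 := by
  have hc := hasCompactSupport_of_tsupport_subset_unitDisk hs
  have hhardy := integrable_sq_mul_inv_sq_one_sub_sq_norm hu hs
  have hgrad : Integrable fun z => ‖fderiv ℝ u z‖ ^ 2 := integrable_sq_norm_fderiv hu hc
  have hcW : HasCompactSupport fun z => u z ^ 2 * (1 - ‖z‖ ^ 2)⁻¹ := hasCompactSupport_sq_mul hc _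
  have hW : ContDiff ℝ 1 fun z => u z ^ 2 * (1 - ‖z‖ ^ 2)⁻¹ :=
    contDiff_sq_mul_of_tsupport_subset_unitDisk hu hs fun _ hz =>
      (contDiffAt_const.sub (contDiff_norm_sq ℝ).contDiffAt).inv (one_sub_sq_norm_pos hz).ne'
  have hintW : Integrable fun z => 2 * (u z ^ 2 * (1 - ‖z‖ ^ 2)⁻¹) :=
    (hW.continuous.integrable_of_hasCompactSupport hcW).const_mul 2
  have hintW' := integrable_fderiv_apply_self (μ := volume) hW hcW
  refine sub_nonpos.1 ?_
  calc _ = ∫ z, (u z ^ 2 * ((1 - ‖z‖ ^ 2) ^ 2)⁻¹ - ‖fderiv ℝ u z‖ ^ 2) :=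
        (integral_sub hhardy hgrad).symm
    _ ≤ ∫ z, (2 * (u z ^ 2 * (1 - ‖z‖ ^ 2)⁻¹) +
          fderiv ℝ (fun z => u z ^ 2 * (1 - ‖z‖ ^ 2)⁻¹) z z) :=
        integral_mono (hhardy.sub hgrad) (hintW.add hintW')
          (sq_mul_sub_sq_norm_fderiv_le (hu.differentiable one_ne_zero) hs)
    _ = 0 := by
        rw [integral_add hintW hintW', integral_const_mul, integral_fderiv_apply_self hW hcW,
          Complex.finrank_real_complex]
        simp

theorem dirichletEnergy_univ_eq {u : ℂ → ℝ} (hu : ContDiff ℝ 1 u) (hc : HasCompactSupport u) :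
    dirichletEnergy u univ = ENNReal.ofReal (∫ z, ‖fderiv ℝ u z‖ ^ 2) := by
  rw [ofReal_integral_eq_lintegral_ofReal (integrable_sq_norm_fderiv hu hc)
    (Eventually.of_forall fun z => sq_nonneg _), dirichletEnergy, setLIntegral_univ]
  simp only [ENNReal.ofReal_pow (norm_nonneg _), ofReal_norm]

theorem lintegral_sq_hyperbolicMeasure_le {u : ℂ → ℝ} (hu : ContDiff ℝ 1 u)
    (hs : tsupport u ⊆ unitDisk) :
    ∫⁻ z, ENNReal.ofReal (u z ^ 2) ∂hyperbolicMeasure ≤ dirichletEnergy u univ := by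
  have hintegrable := integrable_sq_mul_inv_sq_one_sub_sq_norm hu hs
  calc ∫⁻ z, ENNReal.ofReal (u z ^ 2) ∂hyperbolicMeasure
      = ∫⁻ z in unitDisk, ENNReal.ofReal ((1 - ‖z‖ ^ 2) ^ 2)⁻¹ * ENNReal.ofReal (u z ^ 2) :=
        lintegral_hyperbolicMeasure (hu.continuous.pow 2).measurable.ennreal_ofReal
    _ ≤ ∫⁻ z, ENNReal.ofReal ((1 - ‖z‖ ^ 2) ^ 2)⁻¹ * ENNReal.ofReal (u z ^ 2) :=
        setLIntegral_le_lintegral _ _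
    _ = ∫⁻ z, ENNReal.ofReal (u z ^ 2 * ((1 - ‖z‖ ^ 2) ^ 2)⁻¹) := by
        simp only [← ENNReal.ofReal_mul (inv_nonneg.2 (sq_nonneg _)), mul_comm]
    _ = ENNReal.ofReal (∫ z, u z ^ 2 * ((1 - ‖z‖ ^ 2) ^ 2)⁻¹) :=
        (ofReal_integral_eq_lintegral_ofReal hintegrable
          (Eventually.of_forall fun z => by positivity)).symm
    _ ≤ dirichletEnergy u univ := by
        rw [dirichletEnergy_univ_eq hu (hasCompactSupport_of_tsupport_subset_unitDisk hs)]
        exact ENNReal.ofReal_le_ofReal (integral_sq_mul_le_integral_sq_norm_fderiv hu hs)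

/-! ### From decay of the weighted areas to exponential integrability -/

theorem summable_one_div_one_add_abs_sq : Summable fun j : ℤ => 1 / (1 + |(j : ℝ)|) ^ 2 := by
  have h : Summable fun n : ℕ => 1 / (1 + (n : ℝ)) ^ 2 :=
    ((summable_nat_add_iff 1).2 (Real.summable_one_div_nat_pow.2 one_lt_two)).congr fun n => by
      rw [Nat.cast_add_one, add_comm]
  refine Summable.of_nat_of_neg ?_ ?_ <;> simpa using h

-- Measuring distances from an index where `N` is maximal turns the decay into summability.
theorem sum_le_of_decay {N : ℕ → ℝ} {B : ℝ} (hB : 0 ≤ B)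
    (hN : ∀ n m, N n ≤ N m → N n * (1 + |(n : ℝ) - m|) ^ 2 ≤ B) (S : Finset ℕ) :
    ∑ n ∈ S, N n ≤ B * ∑' j : ℤ, 1 / (1 + |(j : ℝ)|) ^ 2 := by
  rcases S.eq_empty_or_nonempty with rfl | hS
  · exact mul_nonneg hB (tsum_nonneg fun j => by positivity)
  obtain ⟨m, -, hmax⟩ := S.exists_max_image N hS
  have hinj : Function.Injective fun n : ℕ => (n : ℤ) - m :=
    (sub_left_injective).comp Nat.cast_injective
  calc ∑ n ∈ S, N n ≤ ∑ n ∈ S, B * (1 / (1 + |(((n : ℤ) - m : ℤ) : ℝ)|) ^ 2) := by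
        refine Finset.sum_le_sum fun n hn => ?_
        rw [mul_one_div, le_div_iff₀ (by positivity)]
        simpa using hN n m (hmax n hn)
    _ = B * ∑ j ∈ S.image (fun n : ℕ => (n : ℤ) - m), 1 / (1 + |(j : ℝ)|) ^ 2 := by
        rw [Finset.sum_image hinj.injOn, Finset.mul_sum]
    _ ≤ _ := mul_le_mul_of_nonneg_left
        (summable_one_div_one_add_abs_sq.sum_le_tsum _ fun j _ => by positivity) hB

theorem tsum_ofReal_le_of_decay {N : ℕ → ℝ} {B : ℝ} (hN₀ : ∀ n, 0 ≤ N n) (hB : 0 ≤ B)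
    (hN : ∀ n m, N n ≤ N m → N n * (1 + |(n : ℝ) - m|) ^ 2 ≤ B) :
    ∑' n, ENNReal.ofReal (N n) ≤ ENNReal.ofReal (B * ∑' j : ℤ, 1 / (1 + |(j : ℝ)|) ^ 2) := by
  rw [ENNReal.tsum_eq_iSup_sum]
  refine iSup_le fun S => ?_
  rw [← ENNReal.ofReal_sum_of_nonneg fun n _ => hN₀ n]
  exact ENNReal.ofReal_le_ofReal (sum_le_of_decay hB hN S)

theorem exp_sub_one_le_mul_exp (t : ℝ) : Real.exp t - 1 ≤ t * Real.exp t := by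
  have h : Real.exp t * (1 - t) ≤ Real.exp t * Real.exp (-t) := by
    gcongr
    linarith [Real.add_one_le_exp (-t)]
  rw [← Real.exp_add, add_neg_cancel, Real.exp_zero] at h
  linarith

theorem ofReal_exp_sub_one_le_tsum {t : ℝ} (ht : 0 ≤ t) (k : ℕ) :
    ENNReal.ofReal (Real.exp t - 1) ≤ ENNReal.ofReal (Real.exp k) * ENNReal.ofReal t +
      ∑' n : ℕ, ENNReal.ofReal (Real.exp (n + k + 1)) * (Ici (n + k : ℝ)).indicator 1 t := by
  rcases lt_or_ge t k with h | h
  · refine le_add_right ?_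
    rw [← ENNReal.ofReal_mul (Real.exp_pos _).le, mul_comm]
    exact ENNReal.ofReal_le_ofReal ((exp_sub_one_le_mul_exp t).trans (by gcongr))
  · obtain ⟨n, hn⟩ := Nat.exists_eq_add_of_le' (Nat.le_floor h)
    have hn' : (⌊t⌋₊ : ℝ) = n + k := by exact_mod_cast hn
    have hmem : t ∈ Ici (n + k : ℝ) := hn'.symm.trans_le (Nat.floor_le ht)
    refine le_add_left (le_trans ?_ (ENNReal.le_tsum n))
    rw [Set.indicator_of_mem hmem, Pi.one_apply, mul_one, ← hn']
    exact ENNReal.ofReal_le_ofReal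
      ((sub_le_self _ zero_le_one).trans (Real.exp_le_exp.2 (Nat.lt_floor_add_one t).le))

theorem lintegral_exp_sub_one_le_tsum {α : Type*} [MeasurableSpace α] (μ : Measure α) {f : α → ℝ}
    (hf : Measurable f) (hf₀ : ∀ y, 0 ≤ f y) (k : ℕ) :
    ∫⁻ y, ENNReal.ofReal (Real.exp (f y) - 1) ∂μ ≤
      ENNReal.ofReal (Real.exp k) * ∫⁻ y, ENNReal.ofReal (f y) ∂μ +
        ∑' n : ℕ, ENNReal.ofReal (Real.exp (n + k + 1)) * μ {y | n + k ≤ f y} := by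
  have hind (n : ℕ) : Measurable fun y => (Ici (n + k : ℝ)).indicator (1 : ℝ → ℝ≥0∞) (f y) :=
    (measurable_one.indicator measurableSet_Ici).comp hf
  refine (lintegral_mono fun y => ofReal_exp_sub_one_le_tsum (hf₀ y) k).trans_eq ?_
  rw [lintegral_add_left (hf.ennreal_ofReal.const_mul _), lintegral_const_mul _ hf.ennreal_ofReal,
    lintegral_tsum fun n => ((hind n).const_mul _).aemeasurable]
  congr! 3 with n
  rw [lintegral_const_mul _ (hind n)]
  congr 1
  exact lintegral_indicator_one (hf measurableSet_Ici)

/-- The level at which the Trudinger–Moser exponent `4πs²` equals `t`, for `t ≥ 0`. -/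
def expLevel (t : ℝ) : ℝ := √(t / (4 * π))

theorem expLevel_nonneg (t : ℝ) : 0 ≤ expLevel t := Real.sqrt_nonneg _

theorem four_pi_mul_expLevel_sq {t : ℝ} (ht : 0 ≤ t) : 4 * π * expLevel t ^ 2 = t := by
  rw [expLevel, Real.sq_sqrt (by positivity)]
  field_simp

theorem superlevel_expLevel {α : Type*} (u : α → ℝ) (t : ℝ) :
    superlevel u (expLevel t) = {y | t ≤ 4 * π * u y ^ 2} := by
  ext y
  rw [superlevel, Set.mem_ofPred_eq, Set.mem_ofPred_eq, expLevel, Real.sqrt_le_iff, sq_abs,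
    div_le_iff₀' (by positivity), and_iff_right (abs_nonneg _)]

theorem measure_superlevel_le_one {α : Type*} [MeasurableSpace α] {μ : Measure α} {u : α → ℝ}
    (hu : Measurable u) (hsq : ∫⁻ y, ENNReal.ofReal (u y ^ 2) ∂μ ≤ 1) {s : ℝ} (hs : 1 ≤ s) :
    μ (superlevel u s) ≤ 1 :=
  calc μ (superlevel u s) ≤ μ {y | 1 ≤ ENNReal.ofReal (u y ^ 2)} := by
        refine measure_mono fun y hy => ENNReal.one_le_ofReal.2 ?_
        exact (one_le_sq_iff_one_le_abs _).2 (hs.trans hy)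
    _ ≤ ∫⁻ y, ENNReal.ofReal (u y ^ 2) ∂μ := by
        simpa only [one_mul] using mul_meas_ge_le_lintegral (hu.pow_const 2).ennreal_ofReal 1
    _ ≤ 1 := hsq

theorem one_le_expLevel {t : ℝ} (ht : 13 ≤ t) : 1 ≤ expLevel t :=
  Real.one_le_sqrt.2 ((one_le_div (by positivity)).2 (by linarith [Real.pi_lt_d2]))

theorem ofReal_exp_mul_measure_superlevel_expLevel {u : ℂ → ℝ} {t : ℝ} (ht : 0 ≤ t)
    (hfinite : hyperbolicMeasure (superlevel u (expLevel t)) ≠ ⊤) :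
    ENNReal.ofReal (Real.exp (t + 1)) * hyperbolicMeasure (superlevel u (expLevel t)) =
      ENNReal.ofReal (Real.exp 1) * ENNReal.ofReal (weightedArea u (expLevel t)) := by
  rw [← ofReal_measureReal hfinite, ← ENNReal.ofReal_mul (Real.exp_pos _).le,
    ← ENNReal.ofReal_mul (Real.exp_pos _).le, weightedArea, four_pi_mul_expLevel_sq ht,
    add_comm t, Real.exp_add, mul_assoc]

/-- A bound for the Trudinger–Moser functional: the Hardy inequality controls the part where the
exponent is less than `13`, the decay of the weighted areas the rest. -/
def trudingerMoserConst : ℝ :=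
  Real.exp 13 * (4 * π) +
    Real.exp 1 * (12 ^ 4 * Real.exp (2 * 27) * ∑' j : ℤ, 1 / (1 + |(j : ℝ)|) ^ 2)

theorem trudingerMoserConst_nonneg : 0 ≤ trudingerMoserConst := by
  have : 0 ≤ ∑' j : ℤ, 1 / (1 + |(j : ℝ)|) ^ 2 := tsum_nonneg fun j => by positivity
  unfold trudingerMoserConst
  positivity

theorem tsum_weightedArea_expLevel_le {u : ℂ → ℝ} (hu : ContDiff ℝ 1 u)
    (hsupp : Function.support u ⊆ unitDisk) (henergy : dirichletEnergy u univ ≤ 1)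
    (hsq : ∫⁻ z, ENNReal.ofReal (u z ^ 2) ∂hyperbolicMeasure ≤ 1) :
    ∑' n : ℕ, ENNReal.ofReal (weightedArea u (expLevel (n + 13))) ≤
      ENNReal.ofReal (12 ^ 4 * Real.exp (2 * 27) * ∑' j : ℤ, 1 / (1 + |(j : ℝ)|) ^ 2) := by
  have hexp (n : ℕ) : 4 * π * expLevel (n + 13) ^ 2 = n + 13 :=
    four_pi_mul_expLevel_sq (by positivity)
  have hexp₁ (n : ℕ) : 1 ≤ 4 * π * expLevel (n + 13) ^ 2 := by
    rw [hexp]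
    linarith [n.cast_nonneg (α := ℝ)]
  have harea (n : ℕ) : hyperbolicMeasure (superlevel u (expLevel (n + 13))) ≤ 1 :=
    measure_superlevel_le_one hu.continuous.measurable hsq (one_le_expLevel (by simp))
  refine tsum_ofReal_le_of_decay (fun n => weightedArea_nonneg u _) (by positivity) fun n m h => ?_
  have hdecay := weightedArea_mul_sq_le hu hsupp henergy (expLevel_nonneg _) (hexp₁ n) (harea n)
    (expLevel_nonneg _) (hexp₁ m) (harea m) h
  rwa [hexp, hexp, add_sub_add_right_eq_sub] at hdecay

theorem lintegral_exp_sub_one_le {u : ℂ → ℝ} (hu : ContDiff ℝ 1 u) (hs : tsupport u ⊆ unitDisk)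
    (henergy : dirichletEnergy u univ ≤ 1) :
    ∫⁻ z, ENNReal.ofReal (Real.exp (4 * π * u z ^ 2) - 1) ∂hyperbolicMeasure ≤
      ENNReal.ofReal trudingerMoserConst := by
  have hsq := (lintegral_sq_hyperbolicMeasure_le hu hs).trans henergy
  have hmeas := hu.continuous.measurable
  have hfinite (n : ℕ) : hyperbolicMeasure (superlevel u (expLevel (n + 13))) ≠ ⊤ :=
    ne_top_of_le_ne_top ENNReal.one_ne_top
      (measure_superlevel_le_one hmeas hsq (one_le_expLevel (by simp)))
  have : 0 ≤ ∑' j : ℤ, 1 / (1 + |(j : ℝ)|) ^ 2 := tsum_nonneg fun j => by positivity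
  calc ∫⁻ z, ENNReal.ofReal (Real.exp (4 * π * u z ^ 2) - 1) ∂hyperbolicMeasure
      ≤ ENNReal.ofReal (Real.exp 13) *
            ∫⁻ z, ENNReal.ofReal (4 * π * u z ^ 2) ∂hyperbolicMeasure +
          ∑' n : ℕ, ENNReal.ofReal (Real.exp (n + 13 + 1)) *
            hyperbolicMeasure {z | n + 13 ≤ 4 * π * u z ^ 2} := by
        simpa using lintegral_exp_sub_one_le_tsum hyperbolicMeasure
          (f := fun z => 4 * π * u z ^ 2) (by fun_prop) (fun z => by positivity) 13
    _ = ENNReal.ofReal (Real.exp 13) * (ENNReal.ofReal (4 * π) *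
            ∫⁻ z, ENNReal.ofReal (u z ^ 2) ∂hyperbolicMeasure) +
          ENNReal.ofReal (Real.exp 1) *
            ∑' n : ℕ, ENNReal.ofReal (weightedArea u (expLevel (n + 13))) := by
        simp_rw [ENNReal.ofReal_mul (by positivity : 0 ≤ 4 * π), ← superlevel_expLevel]
        rw [lintegral_const_mul _ (hmeas.pow_const 2).ennreal_ofReal, ← ENNReal.tsum_mul_left]
        congr! 3 with n
        exact ofReal_exp_mul_measure_superlevel_expLevel (by positivity) (hfinite n)
    _ ≤ ENNReal.ofReal (Real.exp 13) * (ENNReal.ofReal (4 * π) * 1) +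
          ENNReal.ofReal (Real.exp 1) * ENNReal.ofReal
            (12 ^ 4 * Real.exp (2 * 27) * ∑' j : ℤ, 1 / (1 + |(j : ℝ)|) ^ 2) := by
        gcongr
        exact tsum_weightedArea_expLevel_le hu ((subset_tsupport u).trans hs) henergy hsq
    _ = ENNReal.ofReal trudingerMoserConst := by
        rw [mul_one, trudingerMoserConst, ENNReal.ofReal_add (by positivity) (by positivity),
          ENNReal.ofReal_mul (Real.exp_pos _).le, ENNReal.ofReal_mul (Real.exp_pos 1).le]

theorem dirichletEnergy_le_one {u : ℂ → ℝ} (hu : ContDiff ℝ 1 u) (hs : tsupport u ⊆ unitDisk)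
    (hE : ∫ z in unitDisk, ‖gradient u z‖ ^ 2 ≤ 1) : dirichletEnergy u univ ≤ 1 := by
  rw [dirichletEnergy_univ_eq hu (hasCompactSupport_of_tsupport_subset_unitDisk hs)]
  refine ENNReal.ofReal_le_one.2 (le_of_eq_of_le ?_ hE)
  rw [← setIntegral_eq_integral_of_forall_compl_eq_zero (s := unitDisk) fun z hz => ?_]
  · simp [gradient]
  · rw [image_eq_zero_of_notMem_tsupport fun h => hz (hs (tsupport_fderiv_subset ℝ h))]
    simp

theorem invariant_trudinger_moser_general :
    ∃ C : ℝ, ∀ u : ℂ → ℝ, ContDiff ℝ 1 u → tsupport u ⊆ unitDisk →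
      (∫ x in unitDisk, ‖gradient u x‖ ^ 2) ≤ 1 →
      (∫ x in unitDisk, (Real.exp (4 * π * (u x) ^ 2) - 1) / (1 - ‖x‖ ^ 2) ^ 2) ≤ C := by
  refine ⟨trudingerMoserConst, fun u hu hs hE => ?_⟩
  have hmeas : Measurable fun z => Real.exp (4 * π * u z ^ 2) - 1 := by
    have := hu.continuous
    fun_prop
  rw [integral_eq_lintegral_of_nonneg_ae]
  · refine ENNReal.toReal_le_of_le_ofReal trudingerMoserConst_nonneg
      (le_of_eq_of_le ?_ (lintegral_exp_sub_one_le hu hs (dirichletEnergy_le_one hu hs hE)))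
    rw [lintegral_hyperbolicMeasure hmeas.ennreal_ofReal]
    refine lintegral_congr fun z => ?_
    rw [← ENNReal.ofReal_mul (inv_nonneg.2 (sq_nonneg _)), div_eq_inv_mul]
  · exact Eventually.of_forall fun z => div_nonneg
      (sub_nonneg.2 (Real.one_le_exp (by positivity))) (sq_nonneg _)
  · exact (hmeas.div (by fun_prop)).aestronglyMeasurable

/-- Möbius-invariant Trudinger–Moser inequality (Mancini–Sandeep):
`∫_B (e^{4π u²} - 1) dx/(1-|x|²)²` is uniformly bounded over the unit ball of the
gradient norm in `H₀¹(B)`. -/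
theorem invariant_trudinger_moser :
    ∃ C : ℝ, ∀ u : ℂ → ℝ, ContDiff ℝ (⊤ : ℕ∞) u → HasCompactSupport u → tsupport u ⊆ unitDisk →
      (∫ x in unitDisk, ‖gradient u x‖ ^ 2) ≤ 1 →
      (∫ x in unitDisk, (Real.exp (4 * π * (u x) ^ 2) - 1) / (1 - ‖x‖ ^ 2) ^ 2) ≤ C :=
  invariant_trudinger_moser_general.imp fun _ hC u hu _ hs hE =>
    hC u (hu.of_le (by exact_mod_cast le_top)) hs hE
end
end

section
/- The constant 4π in the Möbius-invariant Trudinger-Moser inequality is optimal: for every p > 4π, sup over u ∈ H_0^1(B) with ‖∇u‖_2 ≤ 1 of ∫_B (e^{p u²} - 1) dx/(1-|x|²)² is infinite. -/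
open MeasureTheory Real Filter Set Metric
open scoped Topology RealInnerProductSpace ENNReal

noncomputable section

/-!
Cut the fundamental solution `log (1 / ‖x‖ ^ 2)` off smoothly at height `L` and normalise it in the
Dirichlet norm, which costs a factor `√(4 * |B| * (L + 1))` with `|B|` the area of the unit disk.
On the disk of radius `exp (-L / 2)` the square of the result is about `L / (4 * |B|)`, so
`exp (p * u ^ 2) - 1` has integral of order `exp ((p / (4 * |B|) - 1) * L)`, which is unbounded as
soon as `p > 4 * |B| = 4 * π`. The weight `(1 - ‖x‖ ^ 2)⁻²` is at least `1`, so it only increases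
the integral.
-/

section SmoothPosPart

/-- A smooth approximation of the positive part `max t 0`, equal to `t * exp (-1 / t)` for `t > 0`
and vanishing for `t ≤ 0`. -/
def smoothPosPart (t : ℝ) : ℝ := t * expNegInvGlue t

lemma contDiff_smoothPosPart {n : ℕ∞} : ContDiff ℝ n smoothPosPart :=
  contDiff_id.mul expNegInvGlue.contDiff

lemma smoothPosPart_of_nonpos {t : ℝ} (ht : t ≤ 0) : smoothPosPart t = 0 := by
  rw [smoothPosPart, expNegInvGlue.zero_of_nonpos ht, mul_zero]

lemma smoothPosPart_of_pos {t : ℝ} (ht : 0 < t) : smoothPosPart t = t * exp (-t⁻¹) := by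
  rw [smoothPosPart, expNegInvGlue, if_neg ht.not_ge]

lemma smoothPosPart_nonneg (t : ℝ) : 0 ≤ smoothPosPart t := by
  rcases le_or_gt t 0 with ht | ht
  · exact (smoothPosPart_of_nonpos ht).ge
  · exact mul_nonneg ht.le (expNegInvGlue.nonneg t)

lemma sub_one_le_smoothPosPart (t : ℝ) : t - 1 ≤ smoothPosPart t := by
  rcases le_or_gt t 0 with ht | ht
  · linarith [smoothPosPart_nonneg t]
  · calc t - 1 = t * (-t⁻¹ + 1) := by field_simp; ring
      _ ≤ t * exp (-t⁻¹) := by gcongr; exact add_one_le_exp _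
      _ = smoothPosPart t := (smoothPosPart_of_pos ht).symm

lemma deriv_smoothPosPart_of_nonpos {t : ℝ} (ht : t ≤ 0) : deriv smoothPosPart t = 0 := by
  have hmin : IsLocalMin smoothPosPart t := Eventually.of_forall fun s => by
    rw [smoothPosPart_of_nonpos ht]
    exact smoothPosPart_nonneg s
  exact hmin.deriv_eq_zero

lemma deriv_smoothPosPart_of_pos {t : ℝ} (ht : 0 < t) :
    deriv smoothPosPart t = (t⁻¹ + 1) * exp (-t⁻¹) := by
  have heq : smoothPosPart =ᶠ[𝓝 t] fun s => s * exp (-s⁻¹) := by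
    filter_upwards [lt_mem_nhds ht] with s hs using smoothPosPart_of_pos hs
  have hderiv : HasDerivAt (fun s : ℝ => s * exp (-s⁻¹))
      (1 * exp (-t⁻¹) + t * (exp (-t⁻¹) * -(-(t ^ 2)⁻¹))) t :=
    (hasDerivAt_id t).mul (hasDerivAt_inv ht.ne').neg.exp
  rw [heq.deriv_eq, hderiv.deriv]
  field_simp
  ring

lemma abs_deriv_smoothPosPart_le_one (t : ℝ) : |deriv smoothPosPart t| ≤ 1 := by
  rcases le_or_gt t 0 with ht | ht
  · simp [deriv_smoothPosPart_of_nonpos ht]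
  · rw [deriv_smoothPosPart_of_pos ht, abs_of_nonneg (by positivity)]
    calc (t⁻¹ + 1) * exp (-t⁻¹) ≤ exp t⁻¹ * exp (-t⁻¹) := by gcongr; exact add_one_le_exp _
      _ = 1 := by rw [← exp_add, add_neg_cancel, exp_zero]

end SmoothPosPart

section TruncatedLog

variable {E : Type*} [NormedAddCommGroup E] {δ : ℝ}

/-- The function `log (1 / ‖x‖ ^ 2)`, smoothly truncated at height about `log (1 / δ)` near the
origin. The shift by `1` makes its support a compact subset of the open unit ball. -/
def truncatedLog (δ : ℝ) (x : E) : ℝ := smoothPosPart (-log (‖x‖ ^ 2 + δ) - 1)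

lemma truncatedLog_eq_zero (hδ : 0 < δ) {x : E} (hx : exp (-1) ≤ ‖x‖ ^ 2) :
    truncatedLog δ x = 0 := by
  have hlog : -1 ≤ log (‖x‖ ^ 2 + δ) := (le_log_iff_exp_le (by positivity)).2 (by linarith)
  exact smoothPosPart_of_nonpos (by linarith)

lemma tsupport_truncatedLog_subset (hδ : 0 < δ) :
    tsupport (truncatedLog (E := E) δ) ⊆ closedBall 0 (exp (-1 / 2)) := by
  refine closure_minimal (fun x hx => ?_) isClosed_closedBall
  rw [mem_closedBall_zero_iff]
  by_contra! hlt
  refine hx (truncatedLog_eq_zero hδ ?_)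
  calc exp (-1) = exp (-1 / 2) ^ 2 := by rw [← exp_nat_mul]; norm_num
    _ ≤ ‖x‖ ^ 2 := by gcongr

lemma neg_log_sub_three_le_truncatedLog {x : E} (hδ : 0 < δ) (hx : ‖x‖ ^ 2 ≤ δ) :
    -log δ - 3 ≤ truncatedLog δ x := by
  have hlog : log (‖x‖ ^ 2 + δ) ≤ log δ + 1 :=
    calc log (‖x‖ ^ 2 + δ) ≤ log (2 * δ) := by gcongr; linarith
      _ = log 2 + log δ := log_mul two_ne_zero hδ.ne'
      _ ≤ log δ + 1 := by linarith [log_le_sub_one_of_pos (zero_lt_two (α := ℝ))]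
  calc -log δ - 3 ≤ (-log (‖x‖ ^ 2 + δ) - 1) - 1 := by linarith
    _ ≤ truncatedLog δ x := sub_one_le_smoothPosPart _

variable [InnerProductSpace ℝ E]

lemma contDiff_truncatedLog (hδ : 0 < δ) {n : ℕ∞} : ContDiff ℝ n (truncatedLog (E := E) δ) := by
  have hne (x : E) : ‖x‖ ^ 2 + δ ≠ 0 := by positivity
  exact contDiff_smoothPosPart.comp
    ((((contDiff_norm_sq ℝ).add contDiff_const).log hne).neg.sub contDiff_const)

lemma norm_fderiv_truncatedLog_le (hδ : 0 < δ) (x : E) :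
    ‖fderiv ℝ (truncatedLog δ) x‖ ≤ 2 * ‖x‖ / (‖x‖ ^ 2 + δ) := by
  have hpos : 0 < ‖x‖ ^ 2 + δ := by positivity
  have hlog : HasFDerivAt (fun y : E => -log (‖y‖ ^ 2 + δ) - 1)
      (-((‖x‖ ^ 2 + δ)⁻¹ • (2 • innerSL ℝ x))) x :=
    ((hasStrictFDerivAt_norm_sq x).hasFDerivAt.add_const δ).log hpos.ne' |>.neg.sub_const 1
  have hsmooth := (contDiff_smoothPosPart (n := 1)).differentiable one_ne_zero
    (-log (‖x‖ ^ 2 + δ) - 1)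
  have hchain : fderiv ℝ (truncatedLog δ) x = _ :=
    (hsmooth.hasDerivAt.comp_hasFDerivAt x hlog).fderiv
  calc ‖fderiv ℝ (truncatedLog δ) x‖
      = |deriv smoothPosPart (-log (‖x‖ ^ 2 + δ) - 1)| * ((‖x‖ ^ 2 + δ)⁻¹ * (2 * ‖x‖)) := by
        rw [hchain, norm_smul, norm_neg, norm_smul, norm_eq_abs, norm_eq_abs,
          abs_of_pos (inv_pos.2 hpos), ← Nat.cast_smul_eq_nsmul ℝ, norm_smul, innerSL_apply_norm,
          Real.norm_natCast, Nat.cast_ofNat]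
    _ ≤ 1 * ((‖x‖ ^ 2 + δ)⁻¹ * (2 * ‖x‖)) := by
        gcongr
        exact abs_deriv_smoothPosPart_le_one _
    _ = 2 * ‖x‖ / (‖x‖ ^ 2 + δ) := by ring

lemma norm_fderiv_truncatedLog_sq_le (hδ : 0 < δ) (x : E) :
    ‖fderiv ℝ (truncatedLog δ) x‖ ^ 2 ≤ 4 * (‖x‖ ^ 2 + δ)⁻¹ := by
  have hpos : 0 < ‖x‖ ^ 2 + δ := by positivity
  calc ‖fderiv ℝ (truncatedLog δ) x‖ ^ 2 ≤ (2 * ‖x‖ / (‖x‖ ^ 2 + δ)) ^ 2 := by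
        gcongr
        exact norm_fderiv_truncatedLog_le hδ x
    _ = 4 * (‖x‖ ^ 2 * (‖x‖ ^ 2 + δ)⁻¹) * (‖x‖ ^ 2 + δ)⁻¹ := by ring
    _ ≤ 4 * 1 * (‖x‖ ^ 2 + δ)⁻¹ := by
        gcongr
        rw [mul_inv_le_iff₀ hpos]
        linarith
    _ = 4 * (‖x‖ ^ 2 + δ)⁻¹ := by rw [mul_one]

end TruncatedLog

section MoserFunction

variable {E : Type*} [NormedAddCommGroup E] {V L : ℝ}

/-- The smooth Moser function of height parameter `L`: the truncated logarithm at scale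
`δ = exp (-L)`, normalised to have Dirichlet energy at most `1` on the unit disk of a plane when
`V` is the area of that disk. -/
def moserFunction (V L : ℝ) (x : E) : ℝ :=
  (√(4 * V * (L + 1)))⁻¹ * truncatedLog (exp (-L)) x

lemma tsupport_moserFunction_subset :
    tsupport (moserFunction (E := E) V L) ⊆ closedBall 0 (exp (-1 / 2)) :=
  (tsupport_mul_subset_right (f := fun _ => _)).trans (tsupport_truncatedLog_subset (exp_pos _))

lemma hasCompactSupport_moserFunction [ProperSpace E] :
    HasCompactSupport (moserFunction (E := E) V L) :=
  (isCompact_closedBall 0 _).of_isClosed_subset (isClosed_tsupport _) tsupport_moserFunction_subset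

lemma tsupport_moserFunction_subset_ball :
    tsupport (moserFunction (E := E) V L) ⊆ ball 0 1 :=
  tsupport_moserFunction_subset.trans
    (closedBall_subset_ball (exp_lt_one_iff.2 (by norm_num)))

lemma le_moserFunction_sq (hV : 0 < V) (hL : 3 ≤ L) {x : E} (hx : ‖x‖ ≤ exp (-L / 2)) :
    (L - 7) / (4 * V) ≤ moserFunction V L x ^ 2 := by
  have hsq : ‖x‖ ^ 2 ≤ exp (-L) :=
    calc ‖x‖ ^ 2 ≤ exp (-L / 2) ^ 2 := by gcongr
      _ = exp (-L) := by rw [← exp_nat_mul]; push_cast; ring_nf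
  have hlog : L - 3 ≤ truncatedLog (exp (-L)) x := by
    simpa using neg_log_sub_three_le_truncatedLog (exp_pos _) hsq
  calc (L - 7) / (4 * V) ≤ (L - 3) ^ 2 / (4 * V * (L + 1)) := by
        rw [div_le_div_iff₀ (by positivity) (by positivity)]
        have hnum : (L - 7) * (L + 1) ≤ (L - 3) ^ 2 := by linarith
        calc (L - 7) * (4 * V * (L + 1)) = (L - 7) * (L + 1) * (4 * V) := by ring
          _ ≤ (L - 3) ^ 2 * (4 * V) := by gcongr
    _ ≤ truncatedLog (exp (-L)) x ^ 2 / (4 * V * (L + 1)) := by gcongr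
    _ = moserFunction V L x ^ 2 := by
        rw [moserFunction, mul_pow, inv_pow, sq_sqrt (by positivity), inv_mul_eq_div]

variable [InnerProductSpace ℝ E]

lemma contDiff_moserFunction {n : ℕ∞} : ContDiff ℝ n (moserFunction (E := E) V L) :=
  contDiff_const.mul (contDiff_truncatedLog (exp_pos _))

lemma norm_fderiv_moserFunction_sq (hV : 0 ≤ V) (hL : 0 ≤ L) (x : E) :
    ‖fderiv ℝ (moserFunction V L) x‖ ^ 2
      = (4 * V * (L + 1))⁻¹ * ‖fderiv ℝ (truncatedLog (exp (-L))) x‖ ^ 2 := by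
  have hdiff : DifferentiableAt ℝ (truncatedLog (exp (-L))) x :=
    (contDiff_truncatedLog (exp_pos _) (n := 1)).differentiable one_ne_zero x
  unfold moserFunction
  rw [fderiv_const_mul hdiff, norm_smul, mul_pow, norm_eq_abs, sq_abs, inv_pow,
    sq_sqrt (by positivity)]

end MoserFunction

section BallIntegrals

lemma measureReal_ball_pos {X : Type*} [PseudoMetricSpace X] [ProperSpace X] [MeasurableSpace X]
    (μ : Measure X) [IsFiniteMeasureOnCompacts μ] [μ.IsOpenPosMeasure] (x : X) {r : ℝ}
    (hr : 0 < r) : 0 < μ.real (ball x r) :=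
  ENNReal.toReal_pos (measure_ball_pos μ x hr).ne' measure_ball_lt_top.ne

lemma measureReal_ball_of_pos {E : Type*} [NormedAddCommGroup E] [NormedSpace ℝ E]
    [FiniteDimensional ℝ E] [MeasurableSpace E] [BorelSpace E] (μ : Measure E)
    [μ.IsAddHaarMeasure] (x : E) {r : ℝ} (hr : 0 < r) :
    μ.real (ball x r) = r ^ Module.finrank ℝ E * μ.real (ball 0 1) := by
  rw [Measure.real, Measure.addHaar_ball_of_pos μ x hr, ENNReal.toReal_mul,
    ENNReal.toReal_ofReal (by positivity), Measure.real]

lemma setIntegral_ball_fun_norm {E F : Type*} [NormedAddCommGroup E] [NormedSpace ℝ E]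
    [FiniteDimensional ℝ E] [Nontrivial E] [MeasurableSpace E] [BorelSpace E]
    [NormedAddCommGroup F] [NormedSpace ℝ F] (μ : Measure E) [μ.IsAddHaarMeasure]
    (f : ℝ → F) {R : ℝ} (hR : 0 ≤ R) :
    ∫ x in ball 0 R, f ‖x‖ ∂μ = Module.finrank ℝ E • μ.real (ball 0 1) •
      ∫ r in 0..R, r ^ (Module.finrank ℝ E - 1) • f r := by
  have hind : (ball (0 : E) R).indicator (fun x => f ‖x‖) = fun x => (Iio R).indicator f ‖x‖ := by
    ext x
    simp [indicator]
  rw [← integral_indicator measurableSet_ball, hind, integral_fun_norm_addHaar,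
    intervalIntegral.integral_of_le hR, integral_Ioc_eq_integral_Ioo, ← Ioi_inter_Iio,
    ← setIntegral_indicator measurableSet_Iio]
  simp only [indicator_smul]

lemma integral_mul_inv_sq_add {δ : ℝ} (hδ : 0 < δ) (R : ℝ) :
    ∫ r in 0..R, r * (r ^ 2 + δ)⁻¹ = (log (R ^ 2 + δ) - log δ) / 2 := by
  have hne (r : ℝ) : r ^ 2 + δ ≠ 0 := by positivity
  have hderiv (r : ℝ) : HasDerivAt (fun r => log (r ^ 2 + δ) / 2) (r * (r ^ 2 + δ)⁻¹) r :=
    (((hasDerivAt_pow 2 r).add_const δ).log (hne r) |>.div_const 2).congr_deriv (by simp; ring)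
  have hcont : Continuous fun r : ℝ => r * (r ^ 2 + δ)⁻¹ :=
    continuous_id.mul (Continuous.inv₀ (by fun_prop) hne)
  rw [intervalIntegral.integral_eq_sub_of_hasDerivAt (fun r _ => hderiv r)
    (hcont.intervalIntegrable _ _)]
  ring_nf

lemma setIntegral_le_setIntegral_mul_of_one_le {X : Type*} [TopologicalSpace X] [MeasurableSpace X]
    [OpensMeasurableSpace X] {μ : Measure X} [IsFiniteMeasureOnCompacts μ] {s : Set X}
    {f w : X → ℝ} (hs : IsOpen s) (hf : Continuous f) (hf_nonneg : 0 ≤ f)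
    (hf_compact : HasCompactSupport f) (hf_supp : tsupport f ⊆ s) (hw : ContinuousOn w s)
    (hw_one : ∀ x ∈ s, 1 ≤ w x) :
    ∫ x in s, f x ∂μ ≤ ∫ x in s, f x * w x ∂μ := by
  have hfw : Continuous fun x => f x * w x :=
    (hf.continuousOn.mul hw).continuous_of_tsupport_subset hs
      (tsupport_mul_subset_left.trans hf_supp)
  refine setIntegral_mono_on (hf.integrable_of_hasCompactSupport hf_compact).integrableOn
    (hfw.integrable_of_hasCompactSupport hf_compact.mul_right).integrableOn hs.measurableSet
    fun x hx => le_mul_of_one_le_right (hf_nonneg x) (hw_one x hx)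

end BallIntegrals

section BallWeight

variable {E : Type*} [SeminormedAddCommGroup E]

lemma one_sub_norm_sq_pos {x : E} (hx : x ∈ ball 0 1) : 0 < 1 - ‖x‖ ^ 2 :=
  sub_pos.2 (pow_lt_one₀ (norm_nonneg x) (mem_ball_zero_iff.1 hx) two_ne_zero)

lemma continuousOn_inv_one_sub_norm_sq_sq :
    ContinuousOn (fun x : E => ((1 - ‖x‖ ^ 2) ^ 2)⁻¹) (ball 0 1) :=
  ContinuousOn.inv₀ (by fun_prop) fun _ hx => (pow_pos (one_sub_norm_sq_pos hx) 2).ne'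

lemma one_le_inv_one_sub_norm_sq_sq {x : E} (hx : x ∈ ball 0 1) :
    1 ≤ ((1 - ‖x‖ ^ 2) ^ 2)⁻¹ :=
  one_le_inv₀ (pow_pos (one_sub_norm_sq_pos hx) 2) |>.2 <|
    pow_le_one₀ (one_sub_norm_sq_pos hx).le (sub_le_self 1 (sq_nonneg ‖x‖))

end BallWeight

lemma tendsto_exp_mul_sub_sub_one_mul_exp_neg {q : ℝ} (hq : 1 < q) (a : ℝ) :
    Tendsto (fun L => (exp (q * (L - a)) - 1) * exp (-L)) atTop atTop := by
  have hexp : Tendsto (fun L => exp ((q - 1) * L - q * a)) atTop atTop :=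
    tendsto_exp_atTop.comp <| tendsto_atTop_add_const_right _ _ <|
      tendsto_id.const_mul_atTop (sub_pos.2 hq)
  refine (hexp.atTop_add tendsto_exp_neg_atTop_nhds_zero.neg).congr fun L => ?_
  rw [sub_mul (exp _), ← exp_add, one_mul, ← sub_eq_add_neg]
  ring_nf

section Plane

attribute [local instance] FiniteDimensional.of_fact_finrank_eq_two

variable {E : Type*} [NormedAddCommGroup E] [InnerProductSpace ℝ E]
  [Fact (Module.finrank ℝ E = 2)] [MeasurableSpace E] [BorelSpace E]
  {μ : Measure E} [μ.IsAddHaarMeasure]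

lemma setIntegral_ball_inv_norm_sq_add {δ R : ℝ} (hδ : 0 < δ) (hR : 0 ≤ R) :
    ∫ x in ball (0 : E) R, (‖x‖ ^ 2 + δ)⁻¹ ∂μ
      = μ.real (ball 0 1) * (log (R ^ 2 + δ) - log δ) := by
  have hdim : Module.finrank ℝ E = 2 := Fact.out
  have : Nontrivial E := Module.nontrivial_of_finrank_pos (R := ℝ) (by omega)
  rw [setIntegral_ball_fun_norm μ (fun r => (r ^ 2 + δ)⁻¹) hR, hdim]
  simp only [Nat.add_one_sub_one, pow_one, smul_eq_mul, nsmul_eq_mul, integral_mul_inv_sq_add hδ]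
  push_cast
  ring

lemma setIntegral_norm_fderiv_truncatedLog_sq_le {δ R : ℝ} (hδ : 0 < δ) (hR : 0 ≤ R) :
    ∫ x in ball (0 : E) R, ‖fderiv ℝ (truncatedLog δ) x‖ ^ 2 ∂μ
      ≤ 4 * μ.real (ball 0 1) * (log (R ^ 2 + δ) - log δ) := by
  have hcont : Continuous fun x : E => 4 * (‖x‖ ^ 2 + δ)⁻¹ :=
    continuous_const.mul (Continuous.inv₀ (by fun_prop) fun x => by positivity)
  have hint : IntegrableOn (fun x : E => 4 * (‖x‖ ^ 2 + δ)⁻¹) (ball 0 R) μ :=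
    (hcont.continuousOn.integrableOn_compact (isCompact_closedBall 0 R)).mono_set
      ball_subset_closedBall
  rw [mul_assoc, ← setIntegral_ball_inv_norm_sq_add hδ hR, ← integral_const_mul]
  exact integral_mono_of_nonneg (Eventually.of_forall fun x => by positivity) hint
    (Eventually.of_forall (norm_fderiv_truncatedLog_sq_le hδ))

lemma setIntegral_norm_fderiv_moserFunction_sq_le_one {L : ℝ} (hL : 0 ≤ L) :
    ∫ x in ball (0 : E) 1, ‖fderiv ℝ (moserFunction (μ.real (ball (0 : E) 1)) L) x‖ ^ 2 ∂μ ≤ 1 := by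
  set V := μ.real (ball (0 : E) 1) with hV
  have hVpos : 0 < V := measureReal_ball_pos μ 0 one_pos
  have hlog : log (1 ^ 2 + exp (-L)) ≤ 1 := by
    have hexp : exp (-L) ≤ 1 := exp_le_one_iff.2 (by linarith)
    linarith [log_le_sub_one_of_pos (by positivity : 0 < 1 ^ 2 + exp (-L))]
  simp only [norm_fderiv_moserFunction_sq hVpos.le hL]
  rw [integral_const_mul, inv_mul_le_iff₀ (by positivity), mul_one]
  refine (setIntegral_norm_fderiv_truncatedLog_sq_le (exp_pos _) zero_le_one).trans ?_
  rw [log_exp, ← hV]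
  gcongr
  linarith

lemma le_setIntegral_exp_mul_moserFunction_sq_sub_one {p V L : ℝ} (hp : 0 ≤ p) (hV : 0 < V)
    (hL : 3 ≤ L) :
    (exp (p / (4 * V) * (L - 7)) - 1) * exp (-L) * μ.real (ball (0 : E) 1)
      ≤ ∫ x in ball (0 : E) 1, (exp (p * moserFunction V L x ^ 2) - 1) ∂μ := by
  have hcont : Continuous fun x : E => exp (p * moserFunction V L x ^ 2) - 1 := by
    have := (contDiff_moserFunction (E := E) (V := V) (L := L) (n := 0)).continuous
    fun_prop
  have hint : IntegrableOn (fun x : E => exp (p * moserFunction V L x ^ 2) - 1) (ball 0 1) μ :=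
    (hcont.continuousOn.integrableOn_compact (isCompact_closedBall 0 1)).mono_set
      ball_subset_closedBall
  have hsub : ball (0 : E) (exp (-L / 2)) ⊆ ball 0 1 :=
    ball_subset_ball (exp_le_one_iff.2 (by linarith))
  have harea : μ.real (ball (0 : E) (exp (-L / 2))) = exp (-L) * μ.real (ball (0 : E) 1) := by
    rw [measureReal_ball_of_pos μ 0 (exp_pos _), Fact.out (p := Module.finrank ℝ E = 2),
      ← exp_nat_mul]
    push_cast
    ring_nf
  calc (exp (p / (4 * V) * (L - 7)) - 1) * exp (-L) * μ.real (ball (0 : E) 1)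
      = (exp (p * ((L - 7) / (4 * V))) - 1) * μ.real (ball (0 : E) (exp (-L / 2))) := by
        rw [harea, mul_assoc, div_mul_eq_mul_div, mul_div_assoc]
    _ ≤ ∫ x in ball (0 : E) (exp (-L / 2)), (exp (p * moserFunction V L x ^ 2) - 1) ∂μ := by
        refine setIntegral_ge_of_const_le_real measurableSet_ball measure_ball_lt_top.ne
          (fun x hx => ?_) (hint.mono_set hsub)
        gcongr
        exact le_moserFunction_sq hV hL (mem_ball_zero_iff.1 hx).le
    _ ≤ ∫ x in ball (0 : E) 1, (exp (p * moserFunction V L x ^ 2) - 1) ∂μ :=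
        setIntegral_mono_set hint
          (Eventually.of_forall fun x => sub_nonneg.2 (one_le_exp (by positivity)))
          hsub.eventuallyLE

theorem exists_lt_setIntegral_exp_mul_sq_sub_one {p : ℝ} (hp : 4 * μ.real (ball (0 : E) 1) < p)
    (C : ℝ) :
    ∃ u : E → ℝ, ContDiff ℝ (⊤ : ℕ∞) u ∧ HasCompactSupport u ∧ tsupport u ⊆ ball 0 1 ∧
      (∫ x in ball 0 1, ‖fderiv ℝ u x‖ ^ 2 ∂μ) ≤ 1 ∧
      C < ∫ x in ball 0 1, (exp (p * u x ^ 2) - 1) ∂μ := by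
  set V := μ.real (ball (0 : E) 1)
  have hV : 0 < V := measureReal_ball_pos μ 0 one_pos
  have hq : 1 < p / (4 * V) := (one_lt_div (by positivity)).2 hp
  obtain ⟨L, hLC, hL⟩ : ∃ L, C < (exp (p / (4 * V) * (L - 7)) - 1) * exp (-L) * V ∧ 3 ≤ L :=
    (((tendsto_exp_mul_sub_sub_one_mul_exp_neg hq 7).atTop_mul_const hV).eventually_gt_atTop C
      |>.and (eventually_ge_atTop 3)).exists
  exact ⟨moserFunction V L, contDiff_moserFunction, hasCompactSupport_moserFunction,
    tsupport_moserFunction_subset_ball,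
    setIntegral_norm_fderiv_moserFunction_sq_le_one (by linarith),
    hLC.trans_le (le_setIntegral_exp_mul_moserFunction_sq_sub_one (by linarith) hV hL)⟩

theorem invariant_trudinger_moser_optimal_general {p : ℝ} (hp : 4 * μ.real (ball (0 : E) 1) < p)
    (C : ℝ) :
    ∃ u : E → ℝ, ContDiff ℝ (⊤ : ℕ∞) u ∧ HasCompactSupport u ∧ tsupport u ⊆ ball 0 1 ∧
      (∫ x in ball 0 1, ‖fderiv ℝ u x‖ ^ 2 ∂μ) ≤ 1 ∧
      C < ∫ x in ball 0 1, (exp (p * u x ^ 2) - 1) / (1 - ‖x‖ ^ 2) ^ 2 ∂μ := by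
  obtain ⟨u, hu, hu_compact, hu_supp, hu_energy, hC⟩ :=
    exists_lt_setIntegral_exp_mul_sq_sub_one hp C
  refine ⟨u, hu, hu_compact, hu_supp, hu_energy, hC.trans_le ?_⟩
  have hp_nonneg : 0 ≤ p := le_trans (by positivity) hp.le
  let g : ℝ → ℝ := fun t => exp (p * t ^ 2) - 1
  have hg_zero : g 0 = 0 := by simp [g]
  have hg : Continuous g := by fun_prop
  simp only [div_eq_mul_inv]
  exact setIntegral_le_setIntegral_mul_of_one_le isOpen_ball (hg.comp hu.continuous)
    (fun x => sub_nonneg.2 (one_le_exp (by positivity)))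
    (hu_compact.comp_left hg_zero) ((tsupport_comp_subset hg_zero u).trans hu_supp)
    continuousOn_inv_one_sub_norm_sq_sq fun x hx => one_le_inv_one_sub_norm_sq_sq hx

end Plane

lemma norm_gradient {𝕜 F : Type*} [RCLike 𝕜] [NormedAddCommGroup F] [InnerProductSpace 𝕜 F]
    [CompleteSpace F] (u : F → 𝕜) (x : F) : ‖gradient u x‖ = ‖fderiv 𝕜 u x‖ :=
  LinearIsometryEquiv.norm_map _ _

lemma unitDisk_eq_ball : unitDisk = ball 0 1 := by
  ext z
  rw [mem_ball_zero_iff]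
  rfl

lemma measureReal_ball_complex : (volume : Measure ℂ).real (ball 0 1) = π := by
  simp [Measure.real, Complex.volume_ball]

attribute [local instance] Complex.finrank_real_complex_fact

/-- The constant `4π` in the Möbius-invariant Trudinger–Moser inequality is optimal:
for every `p > 4π` the corresponding supremum is infinite. -/
theorem invariant_trudinger_moser_optimal (p : ℝ) (hp : 4 * π < p) :
    ∀ C : ℝ, ∃ u : ℂ → ℝ, ContDiff ℝ (⊤ : ℕ∞) u ∧ HasCompactSupport u ∧
      tsupport u ⊆ unitDisk ∧ (∫ x in unitDisk, ‖gradient u x‖ ^ 2) ≤ 1 ∧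
      C < ∫ x in unitDisk, (Real.exp (p * (u x) ^ 2) - 1) / (1 - ‖x‖ ^ 2) ^ 2 := by
  intro C
  rw [unitDisk_eq_ball]
  simpa only [norm_gradient] using
    invariant_trudinger_moser_optimal_general (by rwa [measureReal_ball_complex]) C
end
end
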